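/- In the Plancherel growth process, the position d_n of the box added at step n (so Λ_n = Λ_{n−1} ∪ {d_n}) satisfies: n^{−1/2}(a_n − b_n, a_n + b_n) converges in distribution as n → ∞ to (U, Ω_*(U)), where d_n = (a_n, b_n), U has the semicircle distribution with density (1/2π)√(4−u²) on [−2,2], and Ω_*(u) = (2/π)(u·arcsin(u/2) + √(4−u²)) for |u| ≤ 2. -/

import Mathlib

open MeasureTheory Filter
open scoped Topology

structure SYT (μ : YoungDiagram) where
  entry : ℕ → ℕ → ℕ
  mem_iff : ∀ i j, (i, j) ∈ μ ↔ 1 ≤ entry i j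
  le_card : ∀ i j, entry i j ≤ μ.card
  injOn : ∀ i j i' j', (i, j) ∈ μ → (i', j') ∈ μ → entry i j = entry i' j' →
    (i, j) = (i', j')
  row_lt : ∀ i j, (i, j + 1) ∈ μ → entry i j < entry i (j + 1)
  col_lt : ∀ i j, (i + 1, j) ∈ μ → entry i j < entry (i + 1) j

/-- The number of standard Young tableaux of shape `μ`. -/
noncomputable def fSYT (μ : YoungDiagram) : ℕ := Nat.card (SYT μ)

/-- `ν` is obtained from `μ` by adding a single box (`μ ↗ ν`). -/
def YDcovers (μ ν : YoungDiagram) : Prop := μ.cells ⊆ ν.cells ∧ ν.card = μ.card + 1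


/-- `t` is an infinite Young tableau: every cell of the quadrant is filled, every
positive integer appears exactly once, and entries increase along rows and columns
(cells are `(row, column)`). -/
def IsInfYT (t : ℕ → ℕ → ℕ) : Prop :=
  (∀ i j, 1 ≤ t i j) ∧ (∀ n, 1 ≤ n → ∃! c : ℕ × ℕ, t c.1 c.2 = n) ∧
  (∀ i j, t i j < t i (j + 1)) ∧ (∀ i j, t i j < t (i + 1) j)

/-- The cylinder event: the entries `1, …, n` of the infinite tableau form exactly the
standard Young tableau `s`. -/
def cylEvent (μ : YoungDiagram) (s : SYT μ) : Set (ℕ → ℕ → ℕ) :=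
  { t | ∀ i j, (i, j) ∈ μ → t i j = s.entry i j }

/-- `P` is the Plancherel measure of infinite order: a probability measure concentrated
on infinite Young tableaux giving each cylinder event its Plancherel probability
`fSYT μ / (μ.card)!`.  (These properties characterise the Plancherel measure.) -/
def PlancherelLike (P : MeasureTheory.Measure (ℕ → ℕ → ℕ)) : Prop :=
  MeasureTheory.IsProbabilityMeasure P ∧ P { t | IsInfYT t } = 1 ∧
  ∀ (μ : YoungDiagram) (s : SYT μ),
    P (cylEvent μ s) = ENNReal.ofReal ((fSYT μ : ℝ) / (Nat.factorial μ.card))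


/-- The Logan–Shepp–Vershik–Kerov limit shape. -/
noncomputable def Omegastar (u : ℝ) : ℝ :=
  if |u| ≤ 2 then (2 / Real.pi) * (u * Real.arcsin (u / 2) + Real.sqrt (4 - u ^ 2))
  else |u|


open scoped Classical in
/-- The cell of the infinite tableau containing the entry `n` (junk value if none). -/
noncomputable def entryPos (t : ℕ → ℕ → ℕ) (n : ℕ) : ℕ × ℕ :=
  if h : ∃ c : ℕ × ℕ, t c.1 c.2 = n then h.choose else (0, 0)

/-!
The transition probabilities of Plancherel growth average a function of the addable box against
Kerov's transition measure. The moments of that measure and the power sums of the box contents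
satisfy, under addition of one box, recursions whose leading terms force their Plancherel means to
grow like Catalan numbers times the appropriate power of `n`; products of such observables behave
multiplicatively to leading order, so the rescaled observables converge in `L¹`. Since their limits
are the moments of the semicircle law and of the diagonal profile `(Ω_* - |·|) / 2`, the method of
moments applies to both. The number of boxes on a diagonal is `1`-Lipschitz in the content, which
upgrades the weak convergence of the contents to pointwise convergence of the profile. Finally, the
added box sits at a corner of the diagram, so its height is determined by its content and by the
profile there: the height is close to `Ω_*` of a content that is asymptotically semicircular.
-/

section GeometricSeries

variable {ι K : Type*} [Field K]

open PowerSeries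

/-- The geometric series `∑ yᵏ Xᵏ`. With `X = z⁻¹`, the series `X * geometricSeries y` is the
expansion of `(z - y)⁻¹` at infinity. -/
def geometricSeries (y : K) : PowerSeries K := PowerSeries.mk fun k => y ^ k

@[simp]
lemma coeff_geometricSeries (y : K) (k : ℕ) : coeff k (geometricSeries y) = y ^ k :=
  coeff_mk _ _

lemma one_sub_mul_geometricSeries (y : K) : (1 - C y * X) * geometricSeries y = 1 := by
  ext (_ | n)
  · simp [geometricSeries, sub_mul, mul_assoc]
  · simp [geometricSeries, sub_mul, mul_assoc, coeff_succ_X_mul, coeff_one, pow_succ']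

lemma geometricSeries_sub (y z : K) :
    geometricSeries y - geometricSeries z =
      C (y - z) * (X * geometricSeries y * geometricSeries z) := by
  rw [map_sub]
  linear_combination geometricSeries z * one_sub_mul_geometricSeries y
    - geometricSeries y * one_sub_mul_geometricSeries z

lemma X_mul_geometricSeries_mul {y z : K} (h : y ≠ z) :
    X * geometricSeries y * geometricSeries z =
      C (y - z)⁻¹ * (geometricSeries y - geometricSeries z) := by
  rw [geometricSeries_sub, ← mul_assoc, ← map_mul, inv_mul_cancel₀ (sub_ne_zero.2 h), map_one,
    one_mul]

lemma coeff_succ_one_add_geometricSeries (d y : K) (k : ℕ) :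
    coeff (k + 1) (1 + C d * (X * geometricSeries y)) = d * y ^ k := by
  simp [coeff_one, coeff_succ_X_mul]

lemma coeff_zero_prod_one_add_geometricSeries (d : K) (S : Finset ι) (y : ι → K) :
    coeff 0 (∏ j ∈ S, (1 + C d * (X * geometricSeries (y j)))) = 1 := by
  simp [map_prod]

lemma coeff_one_prod_one_add_geometricSeries (d : K) (S : Finset ι) (y : ι → K) :
    coeff 1 (∏ j ∈ S, (1 + C d * (X * geometricSeries (y j)))) = d * S.card := by
  induction S using Finset.cons_induction with
  | empty => simp [coeff_one]
  | cons a S ha ih =>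
    have h0 : coeff 0 (1 + C d * (X * geometricSeries (y a))) = 1 := by simp
    rw [Finset.prod_cons, coeff_mul, Finset.Nat.sum_antidiagonal_eq_sum_range_succ_mk,
      Finset.sum_range_succ, Finset.sum_range_one, h0, coeff_succ_one_add_geometricSeries, ih,
      Nat.sub_self, coeff_zero_prod_one_add_geometricSeries, Finset.card_cons]
    push_cast
    ring

lemma coeff_two_prod_one_add_geometricSeries (d : K) (S : Finset ι) (y : ι → K) :
    coeff 2 (∏ j ∈ S, (1 + C d * (X * geometricSeries (y j)))) =
      d * ∑ j ∈ S, y j + d ^ 2 * S.card.choose 2 := by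
  induction S using Finset.cons_induction with
  | empty => simp [coeff_one]
  | cons a S ha ih =>
    have h0 : coeff 0 (1 + C d * (X * geometricSeries (y a))) = 1 := by simp
    rw [Finset.prod_cons, coeff_mul, Finset.Nat.sum_antidiagonal_eq_sum_range_succ_mk,
      Finset.sum_range_succ, Finset.sum_range_succ, Finset.sum_range_one, h0,
      coeff_succ_one_add_geometricSeries, coeff_succ_one_add_geometricSeries, ih, Nat.sub_self,
      coeff_zero_prod_one_add_geometricSeries, coeff_one_prod_one_add_geometricSeries,
      Finset.sum_cons, Finset.card_cons, Nat.choose_succ_succ', Nat.choose_one_right]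
    push_cast
    ring

end GeometricSeries

section PartialFractions

universe u

variable {ι : Type*} {K : Type u} [DecidableEq ι] [Field K]

/-- The weight `∏_{j ≠ i} (1 + d / (y i - y j))`: up to the factor `d`, the residue at `y i` of
`∏ j, (z - y j + d) / (z - y j)`. -/
def shiftResidue (d : K) (S : Finset ι) (y : ι → K) (i : ι) : K :=
  ∏ j ∈ S.erase i, (1 + d / (y i - y j))

variable {d : K} {S : Finset ι} {y : ι → K} {a i : ι}

lemma shiftResidue_insert_self (ha : a ∉ S) :
    shiftResidue d (insert a S) y a = ∏ j ∈ S, (1 + d / (y a - y j)) := by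
  rw [shiftResidue, Finset.erase_insert ha]

lemma shiftResidue_insert_of_mem (ha : a ∉ S) (hi : i ∈ S) :
    shiftResidue d (insert a S) y i = (1 + d / (y i - y a)) * shiftResidue d S y i := by
  have hai : a ≠ i := fun h => ha (h ▸ hi)
  rw [shiftResidue, shiftResidue, Finset.erase_insert_of_ne hai,
    Finset.prod_insert fun h => ha (Finset.mem_of_mem_erase h)]

lemma shiftResidue_eq_zero {j : ι} (hj : j ∈ S) (hd : d ≠ 0) (h : y j - y i = d) :
    shiftResidue d S y i = 0 := by
  have hji : j ≠ i := by
    rintro rfl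
    exact hd (by rw [← h, sub_self])
  refine Finset.prod_eq_zero (Finset.mem_erase.2 ⟨hji, hj⟩) ?_
  rw [← neg_sub, h, div_neg, div_self hd, add_neg_cancel]

-- The hypothesis on `g` is the resolvent identity. It holds for `g j = (z - y j)⁻¹` with a scalar
-- `z`, and for the expansion of `(z - y j)⁻¹` as a power series in `z⁻¹`.
lemma prod_one_add_smul_resolvent {A : Type u} [CommRing A] [Algebra K A] (hy : Set.InjOn y S)
    (g : ι → A) (hg : ∀ i ∈ S, ∀ j ∈ S, g i - g j = (y i - y j) • (g i * g j)) :
    ∏ j ∈ S, (1 + d • g j) = 1 + d • ∑ i ∈ S, shiftResidue d S y i • g i := by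
  induction S using Finset.induction_on generalizing A with
  | empty => simp
  | insert a S ha ih =>
    rw [Finset.coe_insert] at hy
    have hyS : Set.InjOn y S := hy.mono (Set.subset_insert _ _)
    have hya : ∀ i ∈ S, y a - y i ≠ 0 := fun i hi => sub_ne_zero.2 fun h =>
      ha (hy (Set.mem_insert _ _) (Set.mem_insert_of_mem _ hi) h ▸ hi)
    have residue_self : shiftResidue d (insert a S) y a =
        1 + d * ∑ i ∈ S, shiftResidue d S y i / (y a - y i) := by
      have scalar := ih hyS (fun j => (y a - y j)⁻¹) fun i hi j hj => by
        have := hya i hi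
        have := hya j hj
        simp only [smul_eq_mul]
        field_simp
        ring
      simpa only [shiftResidue_insert_self ha, smul_eq_mul, div_eq_mul_inv] using scalar
    have residue_mem : ∀ i ∈ S, shiftResidue d (insert a S) y i • g i = shiftResidue d S y i • g i
        + d • (g a * (shiftResidue d S y i • g i))
        - d • ((shiftResidue d S y i / (y a - y i)) • g a) := by
      intro i hi
      have hdiv : g a * g i = (y a - y i)⁻¹ • (g a - g i) := by
        rw [hg a (Finset.mem_insert_self _ _) i (Finset.mem_insert_of_mem hi), smul_smul,
          inv_mul_cancel₀ (hya i hi), one_smul]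
      have hneg : y i - y a = -(y a - y i) := (neg_sub _ _).symm
      rw [shiftResidue_insert_of_mem ha hi, hneg, div_neg, mul_smul_comm, hdiv]
      module
    rw [Finset.prod_insert ha, Finset.sum_insert ha, residue_self,
      ih hyS g fun i hi j hj => hg i (Finset.mem_insert_of_mem hi) j (Finset.mem_insert_of_mem hj),
      Finset.sum_congr rfl residue_mem, Finset.sum_sub_distrib, Finset.sum_add_distrib,
      ← Finset.smul_sum, ← Finset.smul_sum, ← Finset.mul_sum, ← Finset.sum_smul]
    simp only [add_mul, mul_add, smul_mul_assoc, mul_smul_comm, one_mul, mul_one]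
    module

lemma prod_one_add_div_sub (hy : Set.InjOn y S) {z : K} (hz : ∀ j ∈ S, z ≠ y j) :
    ∏ j ∈ S, (1 + d / (z - y j)) = 1 + d * ∑ i ∈ S, shiftResidue d S y i / (z - y i) := by
  simpa only [smul_eq_mul, div_eq_mul_inv] using
    prod_one_add_smul_resolvent (A := K) hy (fun j => (z - y j)⁻¹) fun i hi j hj => by
      have := sub_ne_zero.2 (hz i hi)
      have := sub_ne_zero.2 (hz j hj)
      simp only [smul_eq_mul]
      field_simp
      ring

open PowerSeries

lemma prod_one_add_geometricSeries (hy : Set.InjOn y S) :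
    ∏ j ∈ S, (1 + C d * (X * geometricSeries (y j))) =
      1 + C d * ∑ i ∈ S, C (shiftResidue d S y i) * (X * geometricSeries (y i)) := by
  simp only [← smul_eq_C_mul]
  refine prod_one_add_smul_resolvent hy (fun j => X * geometricSeries (y j)) fun i _ j _ => ?_
  rw [Algebra.smul_def, PowerSeries.algebraMap_apply, Algebra.algebraMap_self, RingHom.id_apply]
  linear_combination X * geometricSeries_sub (y i) (y j)

lemma sum_shiftResidue (hd : d ≠ 0) (hy : Set.InjOn y S) :
    ∑ i ∈ S, shiftResidue d S y i = S.card := by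
  have h := congrArg (coeff 1) (prod_one_add_geometricSeries (d := d) hy)
  rw [coeff_one_prod_one_add_geometricSeries] at h
  refine mul_left_cancel₀ hd ?_
  simpa [coeff_one, coeff_succ_X_mul] using h.symm

lemma sum_shiftResidue_mul (hd : d ≠ 0) (hy : Set.InjOn y S) :
    ∑ i ∈ S, shiftResidue d S y i * y i = ∑ i ∈ S, y i + d * S.card.choose 2 := by
  have h := congrArg (coeff 2) (prod_one_add_geometricSeries (d := d) hy)
  rw [coeff_two_prod_one_add_geometricSeries, sq, mul_assoc d d, ← mul_add] at h
  refine mul_left_cancel₀ hd (Eq.trans ?_ h.symm)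
  simp [coeff_one, coeff_succ_X_mul]

end PartialFractions

section YoungDiagrams

variable {μ ν : YoungDiagram} {i : ℕ}

/-- Row `i` of `μ` can receive a box: it is strictly shorter than every row above it. -/
def Addable (μ : YoungDiagram) (i : ℕ) : Prop := ∀ j < i, μ.rowLen i < μ.rowLen j

/-- The last box of row `i` of `μ` can be removed. -/
def Removable (μ : YoungDiagram) (i : ℕ) : Prop := μ.rowLen (i + 1) < μ.rowLen i

instance : DecidablePred (Addable μ) := fun _ => Nat.decidableBallLT _ _

instance : DecidablePred (Removable μ) := fun _ => Nat.decLt _ _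

/-- The smallest Young diagram containing `μ` and the box just after row `i`. If row `i` is
addable, only this box is added. -/
def addCell (μ : YoungDiagram) (i : ℕ) : YoungDiagram :=
  μ ⊔ ⟨Finset.Iic (i, μ.rowLen i), by simpa only [Finset.coe_Iic] using isLowerSet_Iic _⟩

/-- The largest Young diagram contained in `μ` and avoiding the last box of row `i`. If row `i` is
removable, only this box is removed. -/
def remCell (μ : YoungDiagram) (i : ℕ) : YoungDiagram where
  cells := {c ∈ μ.cells | ¬ (i, μ.rowLen i - 1) ≤ c}
  isLowerSet c b hbc hc := by
    simp only [Finset.coe_filter, Set.mem_ofPred_eq] at hc ⊢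
    exact ⟨μ.isLowerSet hbc hc.1, fun hb => hc.2 (hb.trans hbc)⟩

lemma mem_iff_of_cells_eq_insert {c : ℕ × ℕ} (hν : ν.cells = insert c μ.cells) {x : ℕ × ℕ} :
    x ∈ ν ↔ x = c ∨ x ∈ μ := by
  rw [← YoungDiagram.mem_cells, hν, Finset.mem_insert, YoungDiagram.mem_cells]

lemma card_of_cells_eq_insert {c : ℕ × ℕ} (hν : ν.cells = insert c μ.cells) (hc : c ∉ μ) :
    ν.card = μ.card + 1 := by
  rw [YoungDiagram.card, hν, Finset.card_insert_of_notMem (by simpa using hc)]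

lemma addCell_cells (h : Addable μ i) : (addCell μ i).cells = insert (i, μ.rowLen i) μ.cells := by
  ext ⟨a, b⟩
  simp only [addCell, YoungDiagram.cells_sup, Finset.mem_union, YoungDiagram.mem_cells,
    Finset.mem_Iic, Prod.mk_le_mk, Finset.mem_insert, Prod.mk.injEq,
    YoungDiagram.mem_iff_lt_rowLen]
  constructor
  · rintro (hab | ⟨ha, hb⟩)
    · exact Or.inr hab
    · rcases ha.lt_or_eq with ha | rfl
      · exact Or.inr (hb.trans_lt (h a ha))
      · exact hb.lt_or_eq.symm.imp (⟨rfl, ·⟩) id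
  · rintro (⟨rfl, rfl⟩ | hab)
    · exact Or.inr ⟨le_rfl, le_rfl⟩
    · exact Or.inl hab

lemma mem_addCell (h : Addable μ i) {c : ℕ × ℕ} :
    c ∈ addCell μ i ↔ c = (i, μ.rowLen i) ∨ c ∈ μ :=
  mem_iff_of_cells_eq_insert (addCell_cells h)

lemma mk_rowLen_notMem (μ : YoungDiagram) (i : ℕ) : (i, μ.rowLen i) ∉ μ := by
  simp [YoungDiagram.mem_iff_lt_rowLen]

lemma addCell_card (h : Addable μ i) : (addCell μ i).card = μ.card + 1 :=
  card_of_cells_eq_insert (addCell_cells h) (mk_rowLen_notMem μ i)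

lemma rowLen_eq_iff {k : ℕ} : μ.rowLen i = k ↔ ∀ j, (i, j) ∈ μ ↔ j < k := by
  simp only [YoungDiagram.mem_iff_lt_rowLen]
  exact ⟨fun h j => h ▸ Iff.rfl, fun h => eq_of_forall_lt_iff h⟩

lemma addCell_rowLen (h : Addable μ i) :
    (addCell μ i).rowLen = Function.update μ.rowLen i (μ.rowLen i + 1) := by
  funext k
  refine rowLen_eq_iff.2 fun j => ?_
  rw [mem_addCell h, YoungDiagram.mem_iff_lt_rowLen, Prod.mk.injEq]
  rcases eq_or_ne k i with rfl | hk
  · rw [Function.update_self]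
    omega
  · simp [hk]

lemma remCell_insert (h : Removable μ i) :
    μ.cells = insert (i, μ.rowLen i - 1) (remCell μ i).cells := by
  ext ⟨a, b⟩
  simp only [remCell, Finset.mem_insert, Finset.mem_filter, YoungDiagram.mem_cells, Prod.mk_le_mk,
    Prod.mk.injEq, YoungDiagram.mem_iff_lt_rowLen]
  unfold Removable at h
  constructor
  · intro hab
    by_cases hia : i < a
    · have := μ.rowLen_anti (i + 1) a hia
      omega
    · rcases eq_or_ne a i with rfl | ha
      · omega
      · exact Or.inr ⟨hab, by omega⟩
  · rintro (⟨rfl, rfl⟩ | hab)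
    · omega
    · exact hab.1

lemma notMem_remCell (μ : YoungDiagram) (i : ℕ) : (i, μ.rowLen i - 1) ∉ remCell μ i := by
  simp [← YoungDiagram.mem_cells, remCell]

lemma remCell_card (h : Removable μ i) : μ.card = (remCell μ i).card + 1 :=
  card_of_cells_eq_insert (remCell_insert h) (notMem_remCell μ i)

lemma remCell_rowLen (h : Removable μ i) :
    (remCell μ i).rowLen = Function.update μ.rowLen i (μ.rowLen i - 1) := by
  funext k
  refine rowLen_eq_iff.2 fun j => ?_
  have hmem := mem_iff_of_cells_eq_insert (remCell_insert h) (x := (k, j))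
  have hnot := notMem_remCell μ i
  rw [YoungDiagram.mem_iff_lt_rowLen, Prod.mk.injEq] at hmem
  rcases eq_or_ne k i with rfl | hk
  · rw [Function.update_self]
    rcases eq_or_ne j (μ.rowLen k - 1) with rfl | hj
    · simpa using hnot
    · simp only [hj, and_false, false_or] at hmem
      rw [← hmem]
      omega
  · simp only [← YoungDiagram.mem_iff_lt_rowLen, hk, false_and, false_or, ne_eq, not_false_eq_true,
      Function.update_of_ne] at hmem ⊢
    tauto

lemma card_eq_sum_rowLen {N : ℕ} (hN : μ.rowLen N = 0) :
    μ.card = ∑ i ∈ Finset.range N, μ.rowLen i := by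
  rw [YoungDiagram.card, Finset.card_eq_sum_card_fiberwise (f := Prod.fst) (t := Finset.range N)]
  · exact Finset.sum_congr rfl fun i _ => (YoungDiagram.rowLen_eq_card _).symm
  · rintro ⟨a, b⟩ hab
    rw [Finset.mem_coe, YoungDiagram.mem_cells, YoungDiagram.mem_iff_lt_rowLen] at hab
    rw [Finset.mem_coe, Finset.mem_range]
    by_contra! hNa
    have := μ.rowLen_anti N a hNa
    omega

lemma rowLen_eq_zero_of_card_le (hi : μ.card ≤ i) : μ.rowLen i = 0 := by
  by_contra hpos
  have hcol : (i, 0) ∈ μ := YoungDiagram.mem_iff_lt_rowLen.2 (Nat.pos_of_ne_zero hpos)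
  have hsub : μ.col 0 ⊆ μ.cells := Finset.filter_subset _ _
  have := YoungDiagram.mem_iff_lt_colLen.1 hcol
  have := YoungDiagram.colLen_eq_card (μ := μ) (j := 0) ▸ Finset.card_le_card hsub
  exact absurd hi (by rw [YoungDiagram.card]; omega)

end YoungDiagrams

namespace SYT

variable {μ ν : YoungDiagram}

lemma entry_injective : Function.Injective (entry : SYT μ → ℕ → ℕ → ℕ) := by
  rintro ⟨⟩ ⟨⟩ h
  congr

lemma entry_eq_zero (s : SYT μ) {i j : ℕ} (h : (i, j) ∉ μ) : s.entry i j = 0 := by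
  have := (s.mem_iff i j).not.1 h
  omega

instance : Finite (SYT μ) := by
  refine Finite.of_injective (β := μ.cells → Fin (μ.card + 1))
    (fun s c => ⟨s.entry c.1.1 c.1.2, Nat.lt_succ_of_le (s.le_card _ _)⟩) fun s s' h => ?_
  refine entry_injective (funext₂ fun i j => ?_)
  by_cases hij : (i, j) ∈ μ
  · exact Fin.mk.inj (congrFun h ⟨(i, j), hij⟩)
  · rw [s.entry_eq_zero hij, s'.entry_eq_zero hij]

lemma exists_entry_eq (s : SYT μ) {m : ℕ} (h1 : 1 ≤ m) (h2 : m ≤ μ.card) :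
    ∃ c ∈ μ, s.entry c.1 c.2 = m := by
  have hmaps : Set.MapsTo (fun c : ℕ × ℕ => s.entry c.1 c.2) μ.cells (Finset.Icc 1 μ.card) :=
    fun c hc => Finset.mem_coe.2 (Finset.mem_Icc.2 ⟨(s.mem_iff _ _).1 hc, s.le_card _ _⟩)
  have hinj : Set.InjOn (fun c : ℕ × ℕ => s.entry c.1 c.2) μ.cells :=
    fun c hc d hd => s.injOn c.1 c.2 d.1 d.2 hc hd
  exact Finset.surjOn_of_injOn_of_card_le _ hmaps hinj (by simp) (by simp [h1, h2])

/-- The tableau obtained from `s` by placing the entry `μ.card + 1` into the new cell `c`. -/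
def insertMax (s : SYT μ) {c : ℕ × ℕ} (hν : ν.cells = insert c μ.cells) (hc : c ∉ μ) : SYT ν where
  entry a b := if (a, b) = c then μ.card + 1 else s.entry a b
  mem_iff a b := by
    rw [mem_iff_of_cells_eq_insert hν]
    split_ifs with hab
    · simp [hab]
    · simp only [hab, false_or, s.mem_iff]
  le_card a b := by
    rw [card_of_cells_eq_insert hν hc]
    split_ifs
    · exact le_rfl
    · exact (s.le_card a b).trans (Nat.le_succ _)
  injOn a b a' b' hab hab' h := by
    rw [mem_iff_of_cells_eq_insert hν] at hab hab'
    have := s.le_card a b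
    have := s.le_card a' b'
    split_ifs at h with h1 h2 h2
    · rw [h1, h2]
    · omega
    · omega
    · exact s.injOn a b a' b' (hab.resolve_left h1) (hab'.resolve_left h2) h
  row_lt a b hab := by
    rw [mem_iff_of_cells_eq_insert hν] at hab
    have hne : (a, b) ≠ c := by
      rintro rfl
      exact hc (μ.up_left_mem le_rfl (Nat.le_succ b) (hab.resolve_left (by simp)))
    rw [if_neg hne]
    split_ifs with h
    · exact Nat.lt_succ_of_le (s.le_card a b)
    · exact s.row_lt a b (hab.resolve_left h)
  col_lt a b hab := by
    rw [mem_iff_of_cells_eq_insert hν] at hab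
    have hne : (a, b) ≠ c := by
      rintro rfl
      exact hc (μ.up_left_mem (Nat.le_succ a) le_rfl (hab.resolve_left (by simp)))
    rw [if_neg hne]
    split_ifs with h
    · exact Nat.lt_succ_of_le (s.le_card a b)
    · exact s.col_lt a b (hab.resolve_left h)

/-- The tableau obtained from `s` by deleting the cell `c` of the largest entry. -/
def eraseMax (s : SYT ν) {c : ℕ × ℕ} (hν : ν.cells = insert c μ.cells) (hc : c ∉ μ)
    (hs : s.entry c.1 c.2 = ν.card) : SYT μ where
  entry a b := if (a, b) = c then 0 else s.entry a b
  mem_iff a b := by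
    split_ifs with hab
    · simp [hab, hc]
    · rw [← s.mem_iff, mem_iff_of_cells_eq_insert hν, or_iff_right hab]
  le_card a b := by
    have hcard := card_of_cells_eq_insert hν hc
    split_ifs with hab
    · exact Nat.zero_le _
    · by_contra! hlt
      have heq : s.entry a b = s.entry c.1 c.2 := by
        have := s.le_card a b
        omega
      exact hab (s.injOn a b c.1 c.2 ((s.mem_iff a b).2 (by omega))
        ((s.mem_iff _ _).2 (by omega)) heq)
  injOn a b a' b' hab hab' h := by
    rw [if_neg (ne_of_mem_of_not_mem hab hc), if_neg (ne_of_mem_of_not_mem hab' hc)] at h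
    exact s.injOn a b a' b' ((mem_iff_of_cells_eq_insert hν).2 (Or.inr hab))
      ((mem_iff_of_cells_eq_insert hν).2 (Or.inr hab')) h
  row_lt a b hab := by
    have := s.row_lt a b ((mem_iff_of_cells_eq_insert hν).2 (Or.inr hab))
    rw [if_neg (ne_of_mem_of_not_mem hab hc)]
    split_ifs <;> omega
  col_lt a b hab := by
    have := s.col_lt a b ((mem_iff_of_cells_eq_insert hν).2 (Or.inr hab))
    rw [if_neg (ne_of_mem_of_not_mem hab hc)]
    split_ifs <;> omega

lemma exists_removable_entry_eq_card (s : SYT μ) (hμ : 0 < μ.card) :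
    ∃ i, Removable μ i ∧ s.entry i (μ.rowLen i - 1) = μ.card := by
  obtain ⟨⟨i, j⟩, hij, hmax⟩ := s.exists_entry_eq hμ le_rfl
  have hright : (i, j + 1) ∉ μ := fun h =>
    absurd (s.row_lt i j h) (by have := s.le_card i (j + 1); simp only at hmax; omega)
  have hbelow : (i + 1, j) ∉ μ := fun h =>
    absurd (s.col_lt i j h) (by have := s.le_card (i + 1) j; simp only at hmax; omega)
  rw [YoungDiagram.mem_iff_lt_rowLen] at hij hright hbelow
  obtain rfl : j = μ.rowLen i - 1 := by omega
  exact ⟨i, by unfold Removable; omega, hmax⟩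

end SYT

section Dimension

variable {μ : YoungDiagram} {N : ℕ}

lemma Removable.lt {i : ℕ} (h : Removable μ i) (hN : μ.rowLen N = 0) : i < N := by
  by_contra! hNi
  have := μ.rowLen_anti N i hNi
  unfold Removable at h
  omega

namespace SYT

/-- Inserting the maximal entry in a removable corner in one of the rows `0, …, N - 1`. -/
def ofCorner (μ : YoungDiagram) (N : ℕ)
    (p : Σ i : {i ∈ Finset.range N | Removable μ i}, SYT (remCell μ i)) : SYT μ :=
  p.2.insertMax (remCell_insert (Finset.mem_filter.1 p.1.2).2) (notMem_remCell μ p.1)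

lemma ofCorner_injective : Function.Injective (ofCorner μ N) := by
  rintro ⟨i, s⟩ ⟨i', s'⟩ h
  have hentry := congrArg SYT.entry h
  simp only [ofCorner, SYT.insertMax] at hentry
  obtain rfl : i = i' := by
    by_contra hne
    have hmax := congrFun₂ hentry i (μ.rowLen i - 1)
    rw [if_pos rfl, if_neg (by simp [hne])] at hmax
    have := s'.le_card i (μ.rowLen i - 1)
    have := remCell_card (Finset.mem_filter.1 i.2).2
    have := remCell_card (Finset.mem_filter.1 i'.2).2
    omega
  congr
  refine entry_injective (funext₂ fun a b => ?_)
  by_cases hab : (a, b) = ((i : ℕ), μ.rowLen i - 1)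
  · have hnot : (a, b) ∉ remCell μ i := hab ▸ notMem_remCell μ i
    rw [s.entry_eq_zero hnot, s'.entry_eq_zero hnot]
  · simpa [hab] using congrFun₂ hentry a b

lemma ofCorner_surjective (hμ : 0 < μ.card) (hN : μ.rowLen N = 0) :
    Function.Surjective (ofCorner μ N) := by
  intro s
  obtain ⟨i, hi, hmax⟩ := s.exists_removable_entry_eq_card hμ
  refine ⟨⟨⟨i, Finset.mem_filter.2 ⟨Finset.mem_range.2 (hi.lt hN), hi⟩⟩,
    s.eraseMax (remCell_insert hi) (notMem_remCell μ i) hmax⟩, ?_⟩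
  refine entry_injective (funext₂ fun a b => ?_)
  simp only [ofCorner, insertMax, eraseMax, ← remCell_card hi, Prod.mk.injEq]
  split_ifs with hab
  · rw [hab.1, hab.2, hmax]
  · rfl

end SYT

lemma fSYT_eq_sum_remCell (hμ : 0 < μ.card) (hN : μ.rowLen N = 0) :
    fSYT μ = ∑ i ∈ Finset.range N with Removable μ i, fSYT (remCell μ i) := by
  rw [fSYT, ← Nat.card_congr (Equiv.ofBijective (SYT.ofCorner μ N)
    ⟨SYT.ofCorner_injective, SYT.ofCorner_surjective hμ hN⟩), Nat.card_sigma]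
  exact Finset.sum_coe_sort _ fun i => Nat.card (SYT (remCell μ i))

end Dimension

section Vandermonde

open Finset

variable {K : Type*} [Field K] {N k : ℕ} {x : ℕ → K}

/-- The Vandermonde product `∏_{j < i < N} (x j - x i)`. -/
def vandermondeProd (N : ℕ) (x : ℕ → K) : K := ∏ i ∈ range N, ∏ j ∈ range i, (x j - x i)

lemma vandermondeProd_succ (N : ℕ) (x : ℕ → K) :
    vandermondeProd (N + 1) x = vandermondeProd N x * ∏ j ∈ range N, (x j - x N) :=
  prod_range_succ _ _

lemma vandermondeProd_update_of_le (hk : N ≤ k) (a : K) :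
    vandermondeProd N (Function.update x k a) = vandermondeProd N x := by
  refine prod_congr rfl fun i hi => prod_congr rfl fun j hj => ?_
  rw [mem_range] at hi hj
  rw [Function.update_of_ne (by omega), Function.update_of_ne (by omega)]

lemma vandermondeProd_update (hx : Set.InjOn x (range N)) (hk : k < N) (d : K) :
    vandermondeProd N (Function.update x k (x k + d)) =
      vandermondeProd N x * shiftResidue d (range N) x k := by
  induction N with
  | zero => omega
  | succ N ih =>
    have hsub : ∀ j ∈ range (N + 1), j ≠ k → x k - x j ≠ 0 := fun j hj hjk =>
      sub_ne_zero.2 fun h => hjk (hx (mem_coe.2 hj) (mem_coe.2 (mem_range.2 hk)) h.symm)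
    rw [vandermondeProd_succ, vandermondeProd_succ, range_add_one]
    rcases (Nat.lt_succ_iff.1 hk).eq_or_lt with rfl | hkN
    · rw [vandermondeProd_update_of_le le_rfl, shiftResidue_insert_self notMem_range_self,
        mul_assoc, ← prod_mul_distrib]
      congr 1
      refine prod_congr rfl fun j hj => ?_
      have hjk := (mem_range.1 hj).ne
      have := hsub j (mem_range.2 ((mem_range.1 hj).trans hk)) hjk
      rw [Function.update_self, Function.update_of_ne hjk]
      field_simp
      ring
    · have hkmem := mem_range.2 hkN
      have := hsub N (self_mem_range_succ N) hkN.ne'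
      have hlast : ∏ j ∈ range N, (Function.update x k (x k + d) j - x N) =
          (1 + d / (x k - x N)) * ∏ j ∈ range N, (x j - x N) := by
        rw [← mul_prod_erase _ _ hkmem, ← mul_prod_erase (range N) (fun j => x j - x N) hkmem,
          Function.update_self, ← mul_assoc]
        congr 1
        · field_simp
          ring
        · exact prod_congr rfl fun j hj => by rw [Function.update_of_ne (ne_of_mem_erase hj)]
      rw [ih (hx.mono (coe_subset.2 (range_mono N.le_succ))) hkN,
        Function.update_of_ne hkN.ne', hlast,
        shiftResidue_insert_of_mem notMem_range_self hkmem]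
      ring

lemma vandermondeProd_ne_zero (hx : Function.Injective x) : vandermondeProd N x ≠ 0 :=
  prod_ne_zero_iff.2 fun _ _ => prod_ne_zero_iff.2 fun _ hj =>
    sub_ne_zero.2 (hx.ne (mem_range.1 hj).ne)

end Vandermonde

section DimensionFormula

open Finset
open scoped Nat

variable {μ ν : YoungDiagram} {N i : ℕ}

/-- The content (column minus row) of the first box outside `μ` in row `i`. -/
def addContent (μ : YoungDiagram) (i : ℕ) : ℝ := μ.rowLen i - i

lemma addContent_strictAnti (μ : YoungDiagram) : StrictAnti (addContent μ) := fun i j h => by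
  have hrow : (μ.rowLen j : ℝ) ≤ μ.rowLen i := Nat.cast_le.2 (μ.rowLen_anti i j h.le)
  have hij : (i : ℝ) < j := Nat.cast_lt.2 h
  exact (sub_le_sub_right hrow _).trans_lt (sub_lt_sub_left hij _)

lemma addContent_injective (μ : YoungDiagram) : Function.Injective (addContent μ) :=
  (addContent_strictAnti μ).injective

lemma addContent_of_rowLen_eq_zero (h : μ.rowLen i = 0) : addContent μ i = -i := by
  rw [addContent, h, Nat.cast_zero, zero_sub]

lemma addContent_addCell (h : Addable μ i) :
    addContent (addCell μ i) = Function.update (addContent μ) i (addContent μ i + 1) := by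
  funext j
  rcases eq_or_ne j i with rfl | hj
  · simp only [addContent, addCell_rowLen h, Function.update_self]
    push_cast
    ring
  · simp only [addContent, addCell_rowLen h, Function.update_of_ne hj]

lemma addContent_remCell (h : Removable μ i) :
    addContent (remCell μ i) = Function.update (addContent μ) i (addContent μ i + -1) := by
  funext j
  rcases eq_or_ne j i with rfl | hj
  · simp only [addContent, remCell_rowLen h, Function.update_self]
    rw [Nat.cast_sub (Nat.one_le_of_lt h), Nat.cast_one]
    ring
  · simp only [addContent, remCell_rowLen h, Function.update_of_ne hj]

/-- The product of the factorials of the shifted row lengths `μ_i + (N - 1 - i)`, `i < N`. -/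
def shiftedFactorials (N : ℕ) (μ : YoungDiagram) : ℝ :=
  ∏ i ∈ range N, ((μ.rowLen i + (N - 1 - i))! : ℝ)

lemma shiftedFactorials_ne_zero (N : ℕ) (μ : YoungDiagram) : shiftedFactorials N μ ≠ 0 :=
  prod_ne_zero_iff.2 fun _ _ => Nat.cast_ne_zero.2 (Nat.factorial_ne_zero _)

lemma shiftedFactorials_of_rowLen_eq_update (hi : i < N)
    (h : ν.rowLen = Function.update μ.rowLen i (μ.rowLen i + 1)) :
    shiftedFactorials N ν = (addContent μ i + N) * shiftedFactorials N μ := by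
  have hmem := mem_range.2 hi
  rw [shiftedFactorials, shiftedFactorials, ← mul_prod_erase _ _ hmem, h,
    ← mul_prod_erase (range N) (fun i => ((μ.rowLen i + (N - 1 - i))! : ℝ)) hmem, ← mul_assoc]
  congr 1
  · obtain ⟨m, rfl⟩ := Nat.exists_eq_add_of_lt hi
    rw [Function.update_self,
      show μ.rowLen i + 1 + (i + m + 1 - 1 - i) = μ.rowLen i + m + 1 by omega,
      show μ.rowLen i + (i + m + 1 - 1 - i) = μ.rowLen i + m by omega, Nat.factorial_succ,
      addContent]
    push_cast
    ring
  · exact prod_congr rfl fun j hj => by rw [Function.update_of_ne (ne_of_mem_erase hj)]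

/-- Frobenius' expression for `fSYT μ / μ.card !`, up to a factor depending only on `N`. -/
noncomputable def frobeniusQuotient (N : ℕ) (μ : YoungDiagram) : ℝ :=
  vandermondeProd N (addContent μ) / shiftedFactorials N μ

lemma frobeniusQuotient_ne_zero (N : ℕ) (μ : YoungDiagram) : frobeniusQuotient N μ ≠ 0 :=
  div_ne_zero (vandermondeProd_ne_zero (addContent_injective μ)) (shiftedFactorials_ne_zero N μ)

lemma addContent_add_ne_zero (hN : μ.rowLen N = 0) (hi : i < N) : addContent μ i + N ≠ 0 := by
  have := addContent_strictAnti μ hi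
  rw [addContent_of_rowLen_eq_zero hN] at this
  linarith

lemma frobeniusQuotient_addCell (h : Addable μ i) (hi : i < N) :
    frobeniusQuotient N (addCell μ i) = frobeniusQuotient N μ *
      (shiftResidue 1 (range N) (addContent μ) i / (addContent μ i + N)) := by
  rw [frobeniusQuotient, frobeniusQuotient, addContent_addCell h,
    vandermondeProd_update (addContent_injective μ).injOn hi,
    shiftedFactorials_of_rowLen_eq_update hi (addCell_rowLen h), div_mul_div_comm,
    mul_comm (shiftedFactorials N μ)]

lemma frobeniusQuotient_remCell (h : Removable μ i) (hi : i < N) :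
    frobeniusQuotient N (remCell μ i) = frobeniusQuotient N μ *
      ((addContent μ i + N - 1) * shiftResidue (-1) (range N) (addContent μ) i) := by
  have hrow : μ.rowLen =
      Function.update (remCell μ i).rowLen i ((remCell μ i).rowLen i + 1) := by
    rw [remCell_rowLen h, Function.update_self, Function.update_idem,
      Nat.sub_add_cancel (Nat.one_le_of_lt h), Function.update_eq_self]
  have hfact := shiftedFactorials_of_rowLen_eq_update hi hrow
  rw [addContent_remCell h, Function.update_self] at hfact
  have hne := shiftedFactorials_ne_zero N μ
  rw [hfact] at hne
  rw [frobeniusQuotient, frobeniusQuotient, addContent_remCell h,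
    vandermondeProd_update (addContent_injective μ).injOn hi, hfact]
  have := left_ne_zero_of_mul hne
  have := right_ne_zero_of_mul hne
  field_simp
  ring

lemma mul_shiftResidue_eq_zero_of_not_removable (h : ¬ Removable μ i) (hN : μ.rowLen N = 0)
    (hi : i < N) :
    (addContent μ i + N - 1) * shiftResidue (-1) (range N) (addContent μ) i = 0 := by
  have hrow : μ.rowLen (i + 1) = μ.rowLen i :=
    (μ.rowLen_anti i (i + 1) i.le_succ).antisymm (not_lt.1 h)
  rcases (Nat.succ_le_of_lt hi).eq_or_lt with rfl | hiN
  · rw [addContent_of_rowLen_eq_zero (hrow ▸ hN)]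
    push_cast
    ring
  · refine mul_eq_zero_of_right _
      (shiftResidue_eq_zero (mem_range.2 hiN) (neg_ne_zero.2 one_ne_zero) ?_)
    rw [addContent, addContent, hrow]
    push_cast
    ring

lemma sum_addContent (hN : μ.rowLen N = 0) :
    ∑ i ∈ range N, addContent μ i = μ.card - N.choose 2 := by
  simp only [addContent, sum_sub_distrib]
  rw [card_eq_sum_rowLen hN, Nat.choose_two_right, ← sum_range_id, Nat.cast_sum, Nat.cast_sum]

lemma sum_frobeniusQuotient_remCell (hN : μ.rowLen N = 0) :
    ∑ i ∈ range N with Removable μ i, frobeniusQuotient N (remCell μ i) =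
      μ.card * frobeniusQuotient N μ := by
  have hinj : Set.InjOn (addContent μ) (range N) := (addContent_injective μ).injOn
  have hterm : ∀ i ∈ range N,
      (if Removable μ i then frobeniusQuotient N (remCell μ i) else 0) =
        frobeniusQuotient N μ * (shiftResidue (-1) (range N) (addContent μ) i * addContent μ i +
          (N - 1) * shiftResidue (-1) (range N) (addContent μ) i) := by
    intro i hi
    rw [mem_range] at hi
    split_ifs with h
    · rw [frobeniusQuotient_remCell h hi]
      ring
    · linear_combination
        -frobeniusQuotient N μ * mul_shiftResidue_eq_zero_of_not_removable h hN hi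
  have hd : (-1 : ℝ) ≠ 0 := neg_ne_zero.2 one_ne_zero
  rw [sum_filter, sum_congr rfl hterm, ← mul_sum, sum_add_distrib, ← mul_sum,
    sum_shiftResidue_mul hd hinj, sum_shiftResidue hd hinj, sum_addContent hN, card_range,
    Nat.cast_choose_two]
  ring

lemma card_bot : (⊥ : YoungDiagram).card = 0 := rfl

lemma eq_bot_of_card_eq_zero (h : μ.card = 0) : μ = ⊥ :=
  YoungDiagram.ext (card_eq_zero.1 h)

lemma fSYT_bot : fSYT ⊥ = 1 := by
  refine Nat.card_eq_one_iff_unique.2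
    ⟨⟨fun s t => SYT.entry_injective ?_⟩, ⟨⟨0, ?_, ?_, ?_, ?_, ?_⟩⟩⟩
  · funext i j
    rw [s.entry_eq_zero (YoungDiagram.notMem_bot _), t.entry_eq_zero (YoungDiagram.notMem_bot _)]
  all_goals simp

theorem fSYT_eq_frobeniusQuotient (hN : μ.rowLen N = 0) :
    (fSYT μ : ℝ) = μ.card ! * (frobeniusQuotient N μ / frobeniusQuotient N ⊥) := by
  induction hn : μ.card generalizing μ with
  | zero =>
    rw [eq_bot_of_card_eq_zero hn, fSYT_bot, div_self (frobeniusQuotient_ne_zero N ⊥)]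
    simp
  | succ n ih =>
    have hterm : ∀ i ∈ {i ∈ range N | Removable μ i}, (fSYT (remCell μ i) : ℝ) =
        n ! / frobeniusQuotient N ⊥ * frobeniusQuotient N (remCell μ i) := by
      intro i hi
      rw [mem_filter, mem_range] at hi
      have hcard := remCell_card hi.2
      rw [ih (by rw [remCell_rowLen hi.2, Function.update_of_ne hi.1.ne', hN]) (by omega)]
      ring
    rw [fSYT_eq_sum_remCell (by omega) hN, Nat.cast_sum, sum_congr rfl hterm, ← mul_sum,
      sum_frobeniusQuotient_remCell hN, hn, Nat.factorial_succ]
    push_cast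
    ring

lemma fSYT_pos (μ : YoungDiagram) : 0 < fSYT μ := by
  refine Nat.pos_of_ne_zero (Nat.cast_ne_zero (R := ℝ).1 ?_)
  rw [fSYT_eq_frobeniusQuotient (rowLen_eq_zero_of_card_le le_rfl)]
  exact mul_ne_zero (Nat.cast_ne_zero.2 (Nat.factorial_ne_zero _))
    (div_ne_zero (frobeniusQuotient_ne_zero _ _) (frobeniusQuotient_ne_zero _ _))

end DimensionFormula

section TransitionMeasure

open Finset

variable {μ : YoungDiagram} {N i : ℕ}

/-- The probability that the Plancherel growth process at `μ` adds its next box in row `i`. -/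
noncomputable def transitionProb (μ : YoungDiagram) (i : ℕ) : ℝ :=
  if Addable μ i then (fSYT (addCell μ i) : ℝ) / ((μ.card + 1) * fSYT μ) else 0

lemma transitionProb_nonneg (μ : YoungDiagram) (i : ℕ) : 0 ≤ transitionProb μ i := by
  unfold transitionProb
  split_ifs <;> positivity

lemma Addable.lt_card_add_one (h : Addable μ i) : i < μ.card + 1 := by
  by_contra! hi
  have := h μ.card hi
  rw [rowLen_eq_zero_of_card_le le_rfl] at this
  omega

lemma shiftResidue_addContent_of_not_addable (h : ¬ Addable μ i) (hi : i < N) :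
    shiftResidue 1 (range N) (addContent μ) i = 0 := by
  unfold Addable at h
  push Not at h
  obtain ⟨j, hji, hj⟩ := h
  obtain ⟨m, rfl⟩ := Nat.exists_eq_succ_of_ne_zero (Nat.ne_zero_of_lt hji)
  have hrow : μ.rowLen m = μ.rowLen (m + 1) :=
    ((μ.rowLen_anti j m (Nat.lt_succ_iff.1 hji)).trans hj).antisymm
      (μ.rowLen_anti m (m + 1) m.le_succ)
  refine shiftResidue_eq_zero (mem_range.2 (m.lt_succ_self.trans hi)) one_ne_zero ?_
  rw [addContent, addContent, hrow]
  push_cast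
  ring

theorem transitionProb_eq_shiftResidue (hN : μ.rowLen N = 0) (hi : i < N) :
    transitionProb μ i =
      shiftResidue 1 (range N) (addContent μ) i / (addContent μ i + N) := by
  unfold transitionProb
  split_ifs with h
  · have hN' : (addCell μ i).rowLen N = 0 := by
      rw [addCell_rowLen h, Function.update_of_ne hi.ne', hN]
    rw [fSYT_eq_frobeniusQuotient hN, fSYT_eq_frobeniusQuotient hN', addCell_card h,
      frobeniusQuotient_addCell h hi, Nat.factorial_succ]
    have := frobeniusQuotient_ne_zero N μ
    have := frobeniusQuotient_ne_zero N ⊥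
    have := addContent_add_ne_zero hN hi
    have := Nat.cast_ne_zero (R := ℝ).2 (Nat.factorial_ne_zero μ.card)
    push_cast
    field_simp
  · rw [shiftResidue_addContent_of_not_addable h hi, zero_div]

/-- The mean over one step of the growth process at `μ` of a function of the row of the new box. -/
noncomputable def transitionMean (μ : YoungDiagram) : (ℕ → ℝ) →ₗ[ℝ] ℝ :=
  ∑ i ∈ range (μ.card + 1), transitionProb μ i • LinearMap.proj i

lemma transitionMean_apply (μ : YoungDiagram) (φ : ℕ → ℝ) :
    transitionMean μ φ = ∑ i ∈ range (μ.card + 1), transitionProb μ i * φ i := by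
  simp [transitionMean, LinearMap.sum_apply]

lemma transitionMean_eq_sum (hN : μ.card < N) (φ : ℕ → ℝ) :
    transitionMean μ φ = ∑ i ∈ range N, transitionProb μ i * φ i := by
  rw [transitionMean_apply]
  refine sum_subset (range_mono hN) fun i _ hi => ?_
  rw [transitionProb, if_neg fun h => hi (mem_range.2 h.lt_card_add_one), zero_mul]

lemma transitionMean_mono {φ ψ : ℕ → ℝ} (h : ∀ i, Addable μ i → φ i ≤ ψ i) :
    transitionMean μ φ ≤ transitionMean μ ψ := by
  rw [transitionMean_apply, transitionMean_apply]
  refine sum_le_sum fun i _ => ?_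
  by_cases hi : Addable μ i
  · exact mul_le_mul_of_nonneg_left (h i hi) (transitionProb_nonneg μ i)
  · rw [transitionProb, if_neg hi, zero_mul, zero_mul]

lemma transitionMean_congr {φ ψ : ℕ → ℝ} (h : ∀ i, Addable μ i → φ i = ψ i) :
    transitionMean μ φ = transitionMean μ ψ :=
  (transitionMean_mono fun i hi => (h i hi).le).antisymm
    (transitionMean_mono fun i hi => (h i hi).ge)

/-- The `k`-th moment of Kerov's transition measure of `μ`. -/
noncomputable def transitionMoment (k : ℕ) (μ : YoungDiagram) : ℝ :=
  transitionMean μ fun i => addContent μ i ^ k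

open PowerSeries

/-- The Cauchy transform of the transition measure of `μ`, expanded at infinity. It does not depend
on `N` as soon as `μ` has at most `N` rows. -/
noncomputable def momentSeries (N : ℕ) (μ : YoungDiagram) : PowerSeries ℝ :=
  geometricSeries (-N : ℝ) * ∏ i ∈ range N, (1 + X * geometricSeries (addContent μ i))

lemma momentSeries_eq_sum {n : ℕ} (hn : μ.rowLen n = 0) :
    momentSeries (n + 1) μ =
      ∑ i ∈ range (n + 1), C (transitionProb μ i) * geometricSeries (addContent μ i) := by
  have hN : μ.rowLen (n + 1) = 0 :=
    Nat.eq_zero_of_le_zero (hn ▸ μ.rowLen_anti n (n + 1) n.le_succ)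
  set z : ℝ := -((n + 1 : ℕ) : ℝ) with hz
  have hinj : Set.InjOn (addContent μ) (range (n + 1)) := (addContent_injective μ).injOn
  have hne : ∀ i ∈ range (n + 1), addContent μ i ≠ z := fun i hi h =>
    addContent_add_ne_zero hN (mem_range.1 hi) (by rw [h, hz, neg_add_cancel])
  have hroot : ∏ j ∈ range (n + 1), (1 + 1 / (z - addContent μ j)) = 0 := by
    refine prod_eq_zero (self_mem_range_succ n) ?_
    rw [addContent_of_rowLen_eq_zero hn, hz]
    push_cast
    ring_nf
  rw [prod_one_add_div_sub hinj fun j hj => (hne j hj).symm, one_mul] at hroot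
  have hterm : ∀ i ∈ range (n + 1),
      geometricSeries z *
          (C (shiftResidue 1 (range (n + 1)) (addContent μ) i) *
            (X * geometricSeries (addContent μ i))) =
        C (transitionProb μ i) * geometricSeries (addContent μ i) +
          C (shiftResidue 1 (range (n + 1)) (addContent μ) i / (z - addContent μ i)) *
            geometricSeries z := by
    intro i hi
    have hsub : z - addContent μ i = -(addContent μ i + (n + 1 : ℕ)) := by rw [hz]; ring
    rw [transitionProb_eq_shiftResidue hN (mem_range.1 hi), hsub, div_neg, map_neg,
      div_eq_mul_inv, map_mul]
    have hgeo := X_mul_geometricSeries_mul (hne i hi)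
    rw [← neg_sub z, hsub, neg_neg] at hgeo
    linear_combination C (shiftResidue 1 (range (n + 1)) (addContent μ) i) * hgeo
  have hpf := prod_one_add_geometricSeries (d := 1) hinj
  simp only [map_one, one_mul] at hpf
  rw [momentSeries, hpf, mul_add, mul_one, mul_sum, sum_congr rfl hterm, sum_add_distrib,
    ← sum_mul, ← map_sum, eq_neg_of_add_eq_zero_right hroot, map_neg, map_one]
  ring

lemma coeff_momentSeries (hN : μ.card < N) (k : ℕ) :
    coeff k (momentSeries N μ) = transitionMoment k μ := by
  obtain ⟨n, rfl⟩ := Nat.exists_eq_succ_of_ne_zero (Nat.ne_zero_of_lt hN)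
  rw [momentSeries_eq_sum (rowLen_eq_zero_of_card_le (Nat.lt_succ_iff.1 hN)), transitionMoment,
    transitionMean_eq_sum hN]
  simp

lemma transitionMoment_zero (μ : YoungDiagram) : transitionMoment 0 μ = 1 := by
  rw [← coeff_momentSeries (Nat.lt_succ_self _)]
  have h : ∀ y : ℝ, constantCoeff (geometricSeries y) = 1 := fun y => by
    rw [← coeff_zero_eq_constantCoeff_apply, coeff_geometricSeries, pow_zero]
  simp [momentSeries, h, map_prod]

lemma transitionMean_const (μ : YoungDiagram) (a : ℝ) : transitionMean μ (fun _ => a) = a := by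
  have h := map_smul (transitionMean μ) a fun i => addContent μ i ^ 0
  rw [← transitionMoment, transitionMoment_zero] at h
  simpa [Pi.smul_def] using h

lemma momentSeries_addCell (h : Addable μ i) (hi : i < N) :
    momentSeries N (addCell μ i) = momentSeries N μ *
      (1 + X * (X * geometricSeries (addContent μ i + 1) *
        geometricSeries (addContent μ i - 1))) := by
  have hmem := mem_range.2 hi
  have hrest : ∏ j ∈ (range N).erase i, (1 + X * geometricSeries (addContent (addCell μ i) j)) =
      ∏ j ∈ (range N).erase i, (1 + X * geometricSeries (addContent μ j)) :=
    prod_congr rfl fun j hj => by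
      rw [addContent_addCell h, Function.update_of_ne (ne_of_mem_erase hj)]
  rw [momentSeries, momentSeries, ← mul_prod_erase _ _ hmem, hrest, addContent_addCell h,
    Function.update_self,
    ← mul_prod_erase (range N) (fun j => 1 + X * geometricSeries (addContent μ j)) hmem]
  set c := addContent μ i
  set rest := ∏ j ∈ (range N).erase i, (1 + X * geometricSeries (addContent μ j))
  have hup := geometricSeries_sub (c + 1) c
  have hdown := geometricSeries_sub c (c - 1)
  rw [add_sub_cancel_left, map_one, one_mul] at hup
  rw [sub_sub_cancel, map_one, one_mul] at hdown
  linear_combination geometricSeries (-N : ℝ) * rest * X *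
    (hup + X * geometricSeries (c + 1) * hdown)

theorem transitionMoment_addCell (h : Addable μ i) (k : ℕ) :
    transitionMoment (k + 1) (addCell μ i) = transitionMoment (k + 1) μ +
      ∑ p ∈ antidiagonal k, transitionMoment p.1 μ *
        (((addContent μ i + 1) ^ p.2 - (addContent μ i - 1) ^ p.2) / 2) := by
  have hne : addContent μ i + 1 ≠ addContent μ i - 1 := by
    intro h
    linarith
  have hμ : μ.card < μ.card + 2 := by omega
  rw [← coeff_momentSeries (N := μ.card + 2) (by rw [addCell_card h]; omega),
    momentSeries_addCell h (h.lt_card_add_one.trans (Nat.lt_succ_self _)),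
    X_mul_geometricSeries_mul hne, mul_add, mul_one, mul_left_comm, map_add, coeff_succ_X_mul,
    coeff_momentSeries hμ, PowerSeries.coeff_mul]
  congr 1
  refine sum_congr rfl fun p _ => ?_
  rw [coeff_momentSeries hμ, coeff_C_mul, map_sub, coeff_geometricSeries, coeff_geometricSeries,
    add_sub_sub_cancel]
  ring

end TransitionMeasure

section GrowthProcess

open Finset

variable {n : ℕ} {A B : YoungDiagram → ℝ}

/-- The transition operator of the Plancherel growth process. -/
noncomputable def growthStep : (YoungDiagram → ℝ) →ₗ[ℝ] YoungDiagram → ℝ where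
  toFun A μ := transitionMean μ fun i => A (addCell μ i)
  map_add' A _ := funext fun μ => map_add (transitionMean μ) (fun i => A (addCell μ i)) _
  map_smul' r A := funext fun μ => map_smul (transitionMean μ) r fun i => A (addCell μ i)

lemma growthStep_apply (A : YoungDiagram → ℝ) (μ : YoungDiagram) :
    growthStep A μ = transitionMean μ fun i => A (addCell μ i) := rfl

/-- The expectation of a function of the `n`-th diagram of the Plancherel growth process. -/
noncomputable def plancherelMean (n : ℕ) : (YoungDiagram → ℝ) →ₗ[ℝ] ℝ :=
  LinearMap.proj ⊥ ∘ₗ growthStep ^ n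

lemma plancherelMean_zero (A : YoungDiagram → ℝ) : plancherelMean 0 A = A ⊥ := rfl

lemma plancherelMean_succ (n : ℕ) (A : YoungDiagram → ℝ) :
    plancherelMean (n + 1) A = plancherelMean n (growthStep A) := by
  rw [plancherelMean, pow_succ]
  rfl

lemma plancherelMean_mono (h : ∀ μ, μ.card = n → A μ ≤ B μ) :
    plancherelMean n A ≤ plancherelMean n B := by
  induction n generalizing A B with
  | zero => exact h ⊥ card_bot
  | succ n ih =>
    rw [plancherelMean_succ, plancherelMean_succ]
    exact ih fun μ hμ => transitionMean_mono fun i hi => h _ (by rw [addCell_card hi, hμ])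

lemma plancherelMean_congr (h : ∀ μ, μ.card = n → A μ = B μ) :
    plancherelMean n A = plancherelMean n B :=
  (plancherelMean_mono fun μ hμ => (h μ hμ).le).antisymm
    (plancherelMean_mono fun μ hμ => (h μ hμ).ge)

lemma plancherelMean_const (n : ℕ) (r : ℝ) : plancherelMean n (fun _ => r) = r := by
  induction n with
  | zero => rfl
  | succ n ih =>
    rw [plancherelMean_succ]
    exact (plancherelMean_congr fun μ _ => transitionMean_const μ r).trans ih

lemma plancherelMean_nonneg (h : ∀ μ, μ.card = n → 0 ≤ A μ) : 0 ≤ plancherelMean n A :=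
  (plancherelMean_const n 0).symm.trans_le (plancherelMean_mono h)

lemma abs_plancherelMean_le (n : ℕ) (A : YoungDiagram → ℝ) :
    |plancherelMean n A| ≤ plancherelMean n fun μ => |A μ| := by
  rw [abs_le', ← map_neg]
  exact ⟨plancherelMean_mono fun μ _ => le_abs_self _, plancherelMean_mono fun μ _ => neg_le_abs _⟩

end GrowthProcess

section SemicircleMoments

open Finset

/-- The moments of the semicircle law: Catalan numbers in even degree, zero in odd degree. -/
noncomputable def semicircleMoment (k : ℕ) : ℝ := if Even k then (catalan (k / 2) : ℝ) else 0

lemma semicircleMoment_zero : semicircleMoment 0 = 1 := by simp [semicircleMoment]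

lemma semicircleMoment_one : semicircleMoment 1 = 0 := by simp [semicircleMoment]

lemma semicircleMoment_two_mul (n : ℕ) : semicircleMoment (2 * n) = catalan n := by
  simp [semicircleMoment]

lemma semicircleMoment_of_odd {k : ℕ} (hk : Odd k) : semicircleMoment k = 0 :=
  if_neg (Nat.not_even_iff_odd.2 hk)

lemma semicircleMoment_add_two (k : ℕ) :
    semicircleMoment (k + 2) =
      ∑ p ∈ antidiagonal k, semicircleMoment p.1 * semicircleMoment p.2 := by
  rcases Nat.even_or_odd' k with ⟨n, rfl | rfl⟩
  · rw [show 2 * n + 2 = 2 * (n + 1) by ring, semicircleMoment_two_mul, catalan_succ']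
    push_cast
    refine sum_of_injOn (fun p => (2 * p.1, 2 * p.2)) ?_ ?_ ?_ ?_
    · rintro ⟨a, b⟩ _ ⟨c, d⟩ _ h
      simpa using h
    · rintro ⟨a, b⟩ h
      simp only [mem_coe, HasAntidiagonal.mem_antidiagonal] at h ⊢
      omega
    · rintro ⟨a, b⟩ h hnot
      rw [HasAntidiagonal.mem_antidiagonal] at h
      refine mul_eq_zero_of_left (semicircleMoment_of_odd (Nat.not_even_iff_odd.1 fun ha => ?_)) _
      obtain ⟨m, rfl⟩ := ha.two_dvd
      exact hnot ⟨(m, n - m), by simp only [mem_coe, HasAntidiagonal.mem_antidiagonal]; omega,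
        Prod.ext rfl (by simp only; omega)⟩
    · rintro ⟨a, b⟩ _
      rw [semicircleMoment_two_mul, semicircleMoment_two_mul]
  · rw [semicircleMoment_of_odd ⟨n + 1, by ring⟩]
    refine (sum_eq_zero fun p hp => ?_).symm
    rw [HasAntidiagonal.mem_antidiagonal] at hp
    rcases Nat.even_or_odd p.1 with h | h
    · have : Odd p.2 := by
        rw [← Nat.not_even_iff_odd]
        intro h'
        exact Nat.not_even_iff_odd.2 ⟨n, rfl⟩ (hp ▸ h.add h')
      rw [semicircleMoment_of_odd this, mul_zero]
    · rw [semicircleMoment_of_odd h, zero_mul]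

lemma sum_antidiagonal_succ_mul_semicircleMoment (k : ℕ) :
    ∑ p ∈ antidiagonal k, ((p.2 : ℝ) + 1) * (semicircleMoment p.1 * semicircleMoment p.2) =
      ((k : ℝ) + 2) / 2 * semicircleMoment (k + 2) := by
  have hswap : ∑ p ∈ antidiagonal k,
        ((p.1 : ℝ) + 1) * (semicircleMoment p.1 * semicircleMoment p.2) =
      ∑ p ∈ antidiagonal k, ((p.2 : ℝ) + 1) * (semicircleMoment p.1 * semicircleMoment p.2) := by
    rw [← Nat.sum_antidiagonal_swap]
    exact sum_congr rfl fun p _ => by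
      rw [Prod.fst_swap, Prod.snd_swap, mul_comm (semicircleMoment _)]
  have hadd : ∑ p ∈ antidiagonal k,
        ((p.1 : ℝ) + 1) * (semicircleMoment p.1 * semicircleMoment p.2) +
      ∑ p ∈ antidiagonal k, ((p.2 : ℝ) + 1) * (semicircleMoment p.1 * semicircleMoment p.2) =
        ((k : ℝ) + 2) * semicircleMoment (k + 2) := by
    rw [semicircleMoment_add_two, mul_sum, ← sum_add_distrib]
    refine sum_congr rfl fun p hp => ?_
    rw [← HasAntidiagonal.mem_antidiagonal.1 hp]
    push_cast
    ring
  linarith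

lemma semicircleMoment_recurrence (k : ℕ) :
    ((k : ℝ) + 4) * semicircleMoment (k + 2) = 4 * (k + 1) * semicircleMoment k := by
  rcases Nat.even_or_odd' k with ⟨n, rfl | rfl⟩
  · rw [show 2 * n + 2 = 2 * (n + 1) by ring, semicircleMoment_two_mul, semicircleMoment_two_mul]
    have hn : ((n : ℝ) + 1) * catalan n = n.centralBinom := by
      exact_mod_cast succ_mul_catalan_eq_centralBinom n
    have hn' : ((n : ℝ) + 1 + 1) * catalan (n + 1) = (n + 1).centralBinom := by
      exact_mod_cast succ_mul_catalan_eq_centralBinom (n + 1)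
    have hcentral : ((n : ℝ) + 1) * (n + 1).centralBinom = 2 * (2 * n + 1) * n.centralBinom := by
      exact_mod_cast Nat.succ_mul_centralBinom_succ n
    rw [← hn, ← hn'] at hcentral
    apply mul_left_cancel₀ n.cast_add_one_ne_zero
    push_cast
    linear_combination 2 * hcentral
  · rw [semicircleMoment_of_odd ⟨n, rfl⟩, semicircleMoment_of_odd ⟨n + 1, by ring⟩, mul_zero,
      mul_zero]

end SemicircleMoments

section Observables

open Finset

variable {w v : ℤ} {a b : ℝ} {A B : YoungDiagram → ℝ} {F G : YoungDiagram → ℝ → ℝ}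

/-- The sum of the `k`-th powers of the contents of the boxes of `μ`. -/
noncomputable def contentPowerSum (k : ℕ) (μ : YoungDiagram) : ℝ :=
  ∑ c ∈ μ.cells, ((c.2 : ℝ) - c.1) ^ k

lemma contentPowerSum_addCell {μ : YoungDiagram} {i : ℕ} (h : Addable μ i) (k : ℕ) :
    contentPowerSum k (addCell μ i) = contentPowerSum k μ + addContent μ i ^ k := by
  rw [contentPowerSum, addCell_cells h, sum_insert (by simpa using mk_rowLen_notMem μ i), add_comm]
  rfl

/-- `IsObservable w a A`: the function `A` belongs to level `w` of the filtered algebra generated by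
the transition moments and the content power sums, and `a` is the expected limit of
`A (Λₙ) / n ^ (w / 2)`. Sums, products and the passage to a higher level, where the limit is zero,
are built into the predicate. -/
inductive IsObservable : ℤ → ℝ → (YoungDiagram → ℝ) → Prop
  | zero (w : ℤ) : IsObservable w 0 0
  | const (r : ℝ) : IsObservable 0 r fun _ => r
  | transitionMoment (k : ℕ) : IsObservable k (semicircleMoment k) (transitionMoment k)
  | contentPowerSum (k : ℕ) :
      IsObservable (k + 2) (2 * semicircleMoment k / (k + 2)) (contentPowerSum k)
  | add {w : ℤ} {a b : ℝ} {A B : YoungDiagram → ℝ} :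
      IsObservable w a A → IsObservable w b B → IsObservable w (a + b) (A + B)
  | mul {w v : ℤ} {a b : ℝ} {A B : YoungDiagram → ℝ} :
      IsObservable w a A → IsObservable v b B → IsObservable (w + v) (a * b) (A * B)
  | of_lt {w v : ℤ} {a : ℝ} {A : YoungDiagram → ℝ} :
      IsObservable w a A → w < v → IsObservable v 0 A

/-- `IsLocalObservable w a F`: the function `F μ c` is polynomial in `c` with observables as
coefficients, `c` having level one; `a` is the limit of `F` after rescaling when `c` is the content
of a random new box. -/
inductive IsLocalObservable : ℤ → ℝ → (YoungDiagram → ℝ → ℝ) → Prop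
  | zero (w : ℤ) : IsLocalObservable w 0 0
  | monomial {w : ℤ} {a : ℝ} {A : YoungDiagram → ℝ} (j : ℕ) (h : IsObservable w a A) :
      IsLocalObservable (w + j) (a * semicircleMoment j) fun μ c => A μ * c ^ j
  | add {w : ℤ} {a b : ℝ} {F G : YoungDiagram → ℝ → ℝ} :
      IsLocalObservable w a F → IsLocalObservable w b G → IsLocalObservable w (a + b) (F + G)
  | of_lt {w v : ℤ} {a : ℝ} {F : YoungDiagram → ℝ → ℝ} :
      IsLocalObservable w a F → w < v → IsLocalObservable v 0 F

lemma IsObservable.congr (h : IsObservable w a A) (hw : w = v) (ha : a = b) (hA : A = B) :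
    IsObservable v b B :=
  hw ▸ ha ▸ hA ▸ h

namespace IsLocalObservable

lemma congr (h : IsLocalObservable w a F) (hw : w = v) (ha : a = b) (hF : F = G) :
    IsLocalObservable v b G :=
  hw ▸ ha ▸ hF ▸ h

lemma observable_mul (hF : IsLocalObservable v b F) (hA : IsObservable w a A) :
    IsLocalObservable (w + v) (a * b) fun μ c => A μ * F μ c := by
  induction hF with
  | zero v => exact (zero (w + v)).congr rfl (by ring) (by ext; simp)
  | monomial j h =>
    exact (monomial j (hA.mul h)).congr (by ring) (by ring)
      (by ext; simp only [Pi.mul_apply]; ring)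
  | add _ _ ihF ihG =>
    exact (ihF.add ihG).congr rfl (by ring)
      (by ext; simp only [Pi.add_apply]; ring)
  | of_lt _ hlt ih => exact (ih.of_lt (by omega)).congr rfl (by ring) rfl

lemma mul_pow_of_lt (hF : IsLocalObservable w a F) (j : ℕ) (hv : w + j < v) :
    IsLocalObservable v 0 fun μ c => F μ c * c ^ j := by
  induction hF with
  | zero w => exact (zero v).congr rfl rfl (by ext; simp)
  | monomial i h =>
    exact ((monomial (i + j) h).of_lt (by push_cast; omega)).congr rfl rfl (by ext; ring)
  | add _ _ ihF ihG =>
    exact ((ihF hv).add (ihG hv)).congr rfl (by ring)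
      (by ext; simp only [Pi.add_apply]; ring)
  | of_lt _ hlt ih => exact ih (by omega)

lemma mul_of_lt (hF : IsLocalObservable w a F) (hG : IsLocalObservable v b G) {u : ℤ}
    (hu : w + v < u) : IsLocalObservable u 0 (F * G) := by
  induction hF with
  | zero w => exact (zero u).congr rfl rfl (by simp)
  | @monomial w a A j h =>
    exact ((hG.mul_pow_of_lt (v := u - w) j (by omega)).observable_mul h).congr (by ring) (by ring)
      (by ext; simp only [Pi.mul_apply]; ring)
  | add _ _ ihF ihF' => exact ((ihF hu).add (ihF' hu)).congr rfl (by ring) (by rw [add_mul])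
  | of_lt _ hlt ih => exact ih (by omega)

lemma sum {ι : Type*} (s : Finset ι) {a : ι → ℝ} {F : ι → YoungDiagram → ℝ → ℝ}
    (h : ∀ i ∈ s, IsLocalObservable w (a i) (F i)) :
    IsLocalObservable w (∑ i ∈ s, a i) (∑ i ∈ s, F i) := by
  classical
  induction s using Finset.induction_on with
  | empty => exact zero w
  | insert i s hi ih =>
    rw [sum_insert hi, sum_insert hi]
    exact (h i (mem_insert_self i s)).add (ih fun j hj => h j (mem_insert_of_mem hj))

end IsLocalObservable

end Observables

section GrowthOfObservables

open Finset

variable {w : ℤ} {a : ℝ} {A : YoungDiagram → ℝ} {F : YoungDiagram → ℝ → ℝ}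

lemma add_one_pow_sub_sub_one_pow (b : ℕ) (c : ℝ) :
    ((c + 1) ^ (b + 1) - (c - 1) ^ (b + 1)) / 2 =
      (b + 1) * c ^ b +
        ∑ j ∈ range b, ((b + 1).choose j * (1 - (-1) ^ (b + 1 - j)) / 2 : ℝ) * c ^ j := by
  have h : ((c + 1) ^ (b + 1) - (c - 1) ^ (b + 1)) / 2 =
      ∑ j ∈ range (b + 2), ((b + 1).choose j * (1 - (-1) ^ (b + 1 - j)) / 2 : ℝ) * c ^ j := by
    rw [sub_eq_add_neg c 1, add_pow, add_pow, ← sum_sub_distrib, sum_div]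
    refine sum_congr rfl fun j _ => ?_
    rw [one_pow]
    ring
  rw [h, sum_range_succ, sum_range_succ]
  simp only [Nat.choose_succ_self_right, Nat.cast_add, Nat.cast_one, add_tsub_cancel_left, pow_one,
    sub_neg_eq_add, Nat.choose_self, tsub_self, pow_zero, sub_self, mul_zero, zero_div, zero_mul,
    add_zero]
  ring

lemma isLocalObservable_transitionMoment_mul_sub (p q : ℕ) :
    IsLocalObservable (p + q - 1) (q * (semicircleMoment p * semicircleMoment (q - 1)))
      fun μ c => transitionMoment p μ * (((c + 1) ^ q - (c - 1) ^ q) / 2) := by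
  cases q with
  | zero => exact (IsLocalObservable.zero _).congr rfl (by simp) (by ext; simp)
  | succ q =>
    have hlead := IsLocalObservable.monomial q
      ((IsObservable.const (q + 1 : ℝ)).mul (.transitionMoment p))
    have hrest := IsLocalObservable.sum (w := p + q) (range q) fun j hj =>
      (IsLocalObservable.monomial j ((IsObservable.const
        ((q + 1).choose j * (1 - (-1) ^ (q + 1 - j)) / 2 : ℝ)).mul (.transitionMoment p))).of_lt
        (by simpa using mem_range.1 hj)
    refine ((hlead.congr (v := p + q) (by ring) rfl rfl).add hrest).congr (by push_cast; ring)
      (by simp only [sum_const_zero, Nat.cast_add, Nat.cast_one, add_tsub_cancel_right]; ring) ?_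
    ext μ c
    simp only [add_one_pow_sub_sub_one_pow, Pi.add_apply, Pi.mul_apply, Finset.sum_apply, mul_add,
      mul_sum]
    congr 1
    · ring
    · exact sum_congr rfl fun j _ => by ring

/-- `F` computes the increments of `A` along the growth process. -/
def IsIncrement (A : YoungDiagram → ℝ) (F : YoungDiagram → ℝ → ℝ) : Prop :=
  ∀ ⦃μ i⦄, Addable μ i → A (addCell μ i) - A μ = F μ (addContent μ i)

lemma exists_isIncrement_transitionMoment (k : ℕ) :
    ∃ F, IsLocalObservable (k - 2) (k / 2 * semicircleMoment k) F ∧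
      IsIncrement (transitionMoment k) F := by
  cases k with
  | zero =>
    exact ⟨0, (IsLocalObservable.zero _).congr rfl (by simp) rfl,
      fun μ i _ => by simp [transitionMoment_zero]⟩
  | succ k =>
    refine ⟨_, (IsLocalObservable.sum (w := (k + 1 : ℕ) - 2) (antidiagonal k) fun p hp =>
      (isLocalObservable_transitionMoment_mul_sub p.1 p.2).congr ?_ rfl rfl).congr rfl ?_ rfl,
      fun μ i hi => ?_⟩
    · rw [HasAntidiagonal.mem_antidiagonal] at hp
      push_cast
      omega
    · cases k with
      | zero => simp [semicircleMoment_one]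
      | succ k =>
        have h := sum_antidiagonal_succ_mul_semicircleMoment k
        rw [Finset.Nat.sum_antidiagonal_succ']
        push_cast
        simpa [add_assoc, one_add_one_eq_two] using h
    · rw [transitionMoment_addCell hi, add_sub_cancel_left]
      simp only [Finset.sum_apply]

lemma IsObservable.exists_isIncrement (h : IsObservable w a A) :
    ∃ F, IsLocalObservable (w - 2) (w / 2 * a) F ∧ IsIncrement A F := by
  induction h with
  | zero w => exact ⟨0, (IsLocalObservable.zero _).congr rfl (by simp) rfl, fun μ i _ => by simp⟩
  | const r => exact ⟨0, (IsLocalObservable.zero _).congr rfl (by simp) rfl, fun μ i _ => by simp⟩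
  | transitionMoment k => simpa using exists_isIncrement_transitionMoment k
  | contentPowerSum k =>
    refine ⟨fun _ c => c ^ k, (IsLocalObservable.monomial k (.const 1)).congr (by ring) ?_
      (by simp), fun μ i hi => ?_⟩
    · push_cast
      field_simp
    · rw [contentPowerSum_addCell hi, add_sub_cancel_left]
  | add _ _ ihA ihB =>
    obtain ⟨F, hF, hAF⟩ := ihA
    obtain ⟨G, hG, hBG⟩ := ihB
    refine ⟨F + G, (hF.add hG).congr rfl (by ring) rfl, fun μ i hi => ?_⟩
    simp only [Pi.add_apply, ← hAF hi, ← hBG hi]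
    ring
  | @mul w v a b A B hA hB ihA ihB =>
    obtain ⟨F, hF, hAF⟩ := ihA
    obtain ⟨G, hG, hBG⟩ := ihB
    refine ⟨_, (((hG.observable_mul hA).congr (v := w + v - 2) (by ring) rfl rfl).add
      (((hF.observable_mul hB).congr (by ring) rfl rfl).add
        (hF.mul_of_lt hG (by omega)))).congr rfl (by push_cast; ring) rfl, fun μ i hi => ?_⟩
    simp only [Pi.add_apply, Pi.mul_apply, ← hAF hi, ← hBG hi]
    ring
  | of_lt _ hlt ih =>
    obtain ⟨F, hF, hAF⟩ := ih
    exact ⟨F, (hF.of_lt (by omega)).congr rfl (by simp) rfl, hAF⟩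

lemma IsLocalObservable.transitionMean (h : IsLocalObservable w a F) :
    IsObservable w a fun μ => transitionMean μ fun i => F μ (addContent μ i) := by
  induction h with
  | zero w => exact (IsObservable.zero w).congr rfl rfl (funext fun μ => (map_zero _).symm)
  | monomial j h =>
    exact (h.mul (.transitionMoment j)).congr rfl rfl
      (funext fun μ => (map_smul (_root_.transitionMean μ) _ _).symm)
  | add _ _ ihF ihG =>
    exact (ihF.add ihG).congr rfl rfl (funext fun μ => (map_add (_root_.transitionMean μ) _ _).symm)
  | of_lt _ hlt ih => exact ih.of_lt hlt

lemma IsObservable.exists_plancherelMean_succ (h : IsObservable w a A) :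
    ∃ B, IsObservable (w - 2) (w / 2 * a) B ∧
      ∀ n, plancherelMean (n + 1) A = plancherelMean n A + plancherelMean n B := by
  obtain ⟨F, hF, hAF⟩ := h.exists_isIncrement
  refine ⟨_, hF.transitionMean, fun n => ?_⟩
  rw [plancherelMean_succ, ← map_add]
  congr 1
  ext μ
  rw [growthStep_apply, Pi.add_apply, ← transitionMean_const μ (A μ), ← map_add]
  exact transitionMean_congr fun i hi => by rw [Pi.add_apply, ← hAF hi, add_sub_cancel]

lemma IsObservable.eq_zero_of_neg (h : IsObservable w a A) (hw : w < 0) : a = 0 ∧ A = 0 := by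
  induction h with
  | zero w => exact ⟨rfl, rfl⟩
  | const r => exact absurd hw (lt_irrefl 0)
  | transitionMoment k => omega
  | contentPowerSum k => omega
  | add _ _ ihA ihB => simp [ihA hw, ihB hw]
  | @mul w v a b A B _ _ ihA ihB =>
    rcases lt_or_ge w 0 with hw' | hw'
    · simp [ihA hw']
    · simp [ihB (by omega)]
  | of_lt _ hlt ih => exact ⟨rfl, (ih (hlt.trans hw)).2⟩

lemma IsObservable.eq_const (h : IsObservable w a A) (hw : w = 0) : A = fun _ => a := by
  induction h with
  | zero w => rfl
  | const r => rfl
  | transitionMoment k =>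
    obtain rfl : k = 0 := by omega
    exact funext fun μ => by rw [transitionMoment_zero, semicircleMoment_zero]
  | contentPowerSum k => omega
  | add _ _ ihA ihB =>
    rw [ihA hw, ihB hw]
    rfl
  | @mul w v a b A B hA hB ihA ihB =>
    rcases lt_trichotomy w 0 with hw' | hw' | hw'
    · obtain ⟨rfl, rfl⟩ := hA.eq_zero_of_neg hw'
      rw [zero_mul, zero_mul]
      rfl
    · rw [ihA hw', ihB (by omega)]
      rfl
    · obtain ⟨rfl, rfl⟩ := hB.eq_zero_of_neg (by omega)
      rw [mul_zero, mul_zero]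
      rfl
  | of_lt h hlt _ => exact (h.eq_zero_of_neg (hlt.trans_eq hw)).2

end GrowthOfObservables

section Asymptotics

open Finset

lemma tendsto_sum_range_div_of_tendsto_div {b g : ℕ → ℝ} {l : ℝ} (hg : ∀ n, 0 < g n)
    (hsum : Tendsto (fun n => ∑ i ∈ range n, g i) atTop atTop)
    (h : Tendsto (fun n => b n / g n) atTop (𝓝 l)) :
    Tendsto (fun n => (∑ i ∈ range n, b i) / ∑ i ∈ range n, g i) atTop (𝓝 l) := by
  have hlittle : (fun n => b n - l * g n) =o[atTop] g := by
    rw [Asymptotics.isLittleO_iff_tendsto fun n hn => absurd hn (hg n).ne']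
    refine (tendsto_sub_nhds_zero_iff.2 h).congr fun n => ?_
    rw [sub_div, mul_div_cancel_right₀ _ (hg n).ne']
  have hquot := (hlittle.sum_range (fun n => (hg n).le) hsum).tendsto_div_nhds_zero
  refine tendsto_sub_nhds_zero_iff.1 (hquot.congr' ?_)
  filter_upwards [hsum.eventually_gt_atTop 0] with n hn
  rw [sum_sub_distrib, ← mul_sum, sub_div, mul_div_cancel_right₀ _ hn.ne']

/-- The length scale of the `n`-th diagram, shifted by one so that it never vanishes. -/
noncomputable def scale (n : ℕ) : ℝ := √(n + 1)

lemma scale_zero : scale 0 = 1 := by simp [scale]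

lemma scale_sq (n : ℕ) : scale n ^ 2 = n + 1 := Real.sq_sqrt (by positivity)

lemma scale_pos (n : ℕ) : 0 < scale n := Real.sqrt_pos.2 (by positivity)

lemma scale_strictMono : StrictMono scale := fun m n h =>
  Real.sqrt_lt_sqrt (by positivity) (by gcongr)

lemma tendsto_scale : Tendsto scale atTop atTop :=
  Real.tendsto_sqrt_atTop.comp (tendsto_atTop_add_const_right _ _ tendsto_natCast_atTop_atTop)

lemma tendsto_scale_succ_div_scale : Tendsto (fun n => scale (n + 1) / scale n) atTop (𝓝 1) := by
  have h : Tendsto (fun n : ℕ => √(1 + 1 / ((n : ℝ) + 1))) atTop (𝓝 √(1 + 0)) :=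
    (Real.continuous_sqrt.tendsto _).comp
      (tendsto_const_nhds.add tendsto_one_div_add_atTop_nhds_zero_nat)
  rw [add_zero, Real.sqrt_one] at h
  refine h.congr fun n => ?_
  rw [scale, scale, ← Real.sqrt_div' _ (by positivity)]
  congr 1
  push_cast
  field_simp

lemma scale_succ_pow_sub_div (p n : ℕ) :
    (scale (n + 1) ^ (p + 2) - scale n ^ (p + 2)) / scale n ^ p =
      (∑ i ∈ range (p + 2), (scale (n + 1) / scale n) ^ i) / (scale (n + 1) / scale n + 1) := by
  have hs := scale_pos n
  have hs' := scale_pos (n + 1)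
  have hsq : scale (n + 1) ^ 2 = scale n ^ 2 + 1 := by
    rw [scale_sq, scale_sq]
    push_cast
    ring
  set s := scale n
  set s' := scale (n + 1)
  have hpow : s' ^ (p + 2) - s ^ (p + 2) = s ^ p * (s ^ 2 * ((s' / s) ^ (p + 2) - 1)) := by
    rw [div_pow, pow_add s p 2]
    field_simp
  have hstep : s ^ 2 * (s' / s - 1) * (s' / s + 1) = 1 := by
    field_simp
    linear_combination hsq
  rw [hpow, mul_div_cancel_left₀ _ (by positivity), ← geom_sum_mul, eq_div_iff (by positivity)]
  linear_combination (∑ i ∈ range (p + 2), (s' / s) ^ i) * hstep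

lemma tendsto_scale_succ_pow_sub_div (p : ℕ) :
    Tendsto (fun n => (scale (n + 1) ^ (p + 2) - scale n ^ (p + 2)) / scale n ^ p) atTop
      (𝓝 ((p + 2) / 2)) := by
  simp only [scale_succ_pow_sub_div]
  have h : Tendsto (fun n => (∑ i ∈ range (p + 2), (scale (n + 1) / scale n) ^ i) /
      (scale (n + 1) / scale n + 1)) atTop (𝓝 ((∑ i ∈ range (p + 2), (1 : ℝ) ^ i) / (1 + 1))) :=
    (tendsto_finsetSum _ fun i _ => tendsto_scale_succ_div_scale.pow i).div
      (tendsto_scale_succ_div_scale.add tendsto_const_nhds) (by norm_num)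
  simpa [one_add_one_eq_two] using h

lemma tendsto_sum_range_div_scale_pow {k : ℕ} {b : ℕ → ℝ} {β : ℝ}
    (h : Tendsto (fun n => b n / scale n ^ k) atTop (𝓝 β)) :
    Tendsto (fun n => (∑ m ∈ range n, b m) / scale n ^ (k + 2)) atTop (𝓝 (2 * β / (k + 2))) := by
  have hpow : Tendsto (fun n => scale n ^ (k + 2)) atTop atTop :=
    (tendsto_pow_atTop (by omega)).comp tendsto_scale
  have hsum (n : ℕ) : ∑ m ∈ range n, (scale (m + 1) ^ (k + 2) - scale m ^ (k + 2)) =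
      scale n ^ (k + 2) - 1 := by
    rw [sum_range_sub (fun m => scale m ^ (k + 2)), scale_zero, one_pow]
  have hquot : Tendsto (fun n => b n / (scale (n + 1) ^ (k + 2) - scale n ^ (k + 2))) atTop
      (𝓝 (β / ((k + 2) / 2))) :=
    (h.div (tendsto_scale_succ_pow_sub_div k) (by positivity)).congr fun n =>
      div_div_div_cancel_right₀ (pow_ne_zero k (scale_pos n).ne') _ _
  have hstolz := tendsto_sum_range_div_of_tendsto_div
    (fun n => sub_pos.2 (pow_lt_pow_left₀ (scale_strictMono n.lt_succ_self) (scale_pos n).le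
      (by omega)))
    (by simpa only [Nat.succ_eq_add_one, hsum, ← sub_eq_add_neg] using
      tendsto_atTop_add_const_right _ (-1) hpow) hquot
  simp only [hsum] at hstolz
  have hratio : Tendsto (fun n => (scale n ^ (k + 2) - 1) / scale n ^ (k + 2)) atTop (𝓝 1) := by
    have := hpow.inv_tendsto_atTop.const_sub 1
    rw [sub_zero] at this
    refine this.congr fun n => ?_
    rw [sub_div, div_self (pow_ne_zero _ (scale_pos n).ne'), one_div, Pi.inv_apply]
  have hprod := hstolz.mul hratio
  rw [mul_one, div_div_eq_mul_div, mul_comm β] at hprod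
  refine hprod.congr' ?_
  filter_upwards [hpow.eventually_gt_atTop 1] with n hn
  exact div_mul_div_cancel₀ (sub_pos.2 hn).ne'

variable {k : ℕ} {a : ℝ} {A : YoungDiagram → ℝ}

lemma plancherelMean_eq_sum_range {B : YoungDiagram → ℝ}
    (h : ∀ n, plancherelMean (n + 1) A = plancherelMean n A + plancherelMean n B) (n : ℕ) :
    plancherelMean n A = A ⊥ + ∑ m ∈ range n, plancherelMean m B := by
  induction n with
  | zero => rw [plancherelMean_zero, sum_range_zero, add_zero]
  | succ n ih => rw [h, ih, sum_range_succ, add_assoc]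

lemma IsObservable.tendsto_plancherelMean (h : IsObservable k a A) :
    Tendsto (fun n => plancherelMean n A / scale n ^ k) atTop (𝓝 a) := by
  induction k using Nat.strong_induction_on generalizing a A with
  | _ k ih =>
    obtain ⟨B, hB, hstep⟩ := h.exists_plancherelMean_succ
    match k with
    | 0 =>
      simp only [h.eq_const rfl, plancherelMean_const, pow_zero, div_one]
      exact tendsto_const_nhds
    | 1 =>
      obtain ⟨ha, rfl⟩ := hB.eq_zero_of_neg (by norm_num)
      obtain rfl : a = 0 := by simpa using ha
      simp only [plancherelMean_eq_sum_range hstep, map_zero, sum_const_zero, add_zero, pow_one]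
      exact tendsto_const_nhds.div_atTop tendsto_scale
    | k + 2 =>
      have hmean := tendsto_sum_range_div_scale_pow
        (ih k (by omega) (hB.congr (by push_cast; ring) rfl rfl))
      have hzero := (tendsto_const_nhds (x := A ⊥)).div_atTop
        ((tendsto_pow_atTop (by omega : k + 2 ≠ 0)).comp tendsto_scale)
      convert hzero.add hmean using 2 with n
      · rw [plancherelMean_eq_sum_range hstep, add_div, Function.comp_apply]
      · push_cast
        field_simp
        ring

lemma sq_plancherelMean_le (n : ℕ) (A : YoungDiagram → ℝ) :
    plancherelMean n A ^ 2 ≤ plancherelMean n (A ^ 2) := by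
  set m := plancherelMean n A
  have hvar : 0 ≤ plancherelMean n (A ^ 2 - (2 * m) • A + fun _ => m ^ 2) :=
    plancherelMean_nonneg fun μ _ => by
      simp only [Pi.add_apply, Pi.sub_apply, Pi.pow_apply, Pi.smul_apply, smul_eq_mul]
      linarith [sq_nonneg (A μ - m)]
  rw [map_add, map_sub, map_smul, plancherelMean_const, smul_eq_mul] at hvar
  linarith

lemma IsObservable.tendsto_plancherelMean_sq_sub (h : IsObservable k a A) :
    Tendsto (fun n => plancherelMean n fun μ => (A μ / scale n ^ k - a) ^ 2) atTop (𝓝 0) := by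
  have hsq : Tendsto (fun n => plancherelMean n (A * A) / scale n ^ (k + k)) atTop (𝓝 (a * a)) :=
    ((h.mul h).congr (by push_cast; rfl) rfl rfl).tendsto_plancherelMean
  convert ((hsq.sub (h.tendsto_plancherelMean.const_mul (2 * a))).add_const (a ^ 2)) using 2 with n
  · have hs := (scale_pos n).ne'
    have hexpand : (fun μ => (A μ / scale n ^ k - a) ^ 2) =
        (1 / scale n ^ (k + k)) • (A * A) - (2 * a / scale n ^ k) • A + fun _ => a ^ 2 := by
      ext μ
      simp only [Pi.add_apply, Pi.sub_apply, Pi.mul_apply, Pi.smul_apply, smul_eq_mul, pow_add]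
      field_simp
      ring
    rw [hexpand, map_add, map_sub, map_smul, map_smul, plancherelMean_const, smul_eq_mul,
      smul_eq_mul]
    ring
  · ring

theorem IsObservable.tendsto_plancherelMean_abs_sub (h : IsObservable k a A) :
    Tendsto (fun n => plancherelMean n fun μ => |A μ / scale n ^ k - a|) atTop (𝓝 0) := by
  have hsqrt := h.tendsto_plancherelMean_sq_sub.sqrt
  rw [Real.sqrt_zero] at hsqrt
  refine squeeze_zero (fun n => plancherelMean_nonneg fun μ _ => abs_nonneg _) (fun n => ?_) hsqrt
  refine Real.le_sqrt_of_sq_le ((sq_plancherelMean_le n _).trans_eq (congrArg _ ?_))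
  exact funext fun μ => sq_abs _

lemma tendsto_plancherelMean_abs_transitionMoment_sub (k : ℕ) :
    Tendsto (fun n => plancherelMean n fun μ =>
      |transitionMoment k μ / scale n ^ k - semicircleMoment k|) atTop (𝓝 0) :=
  (IsObservable.transitionMoment k).tendsto_plancherelMean_abs_sub

lemma tendsto_plancherelMean_abs_contentPowerSum_sub (k : ℕ) :
    Tendsto (fun n => plancherelMean n fun μ =>
      |contentPowerSum k μ / scale n ^ (k + 2) - 2 * semicircleMoment k / (k + 2)|) atTop (𝓝 0) :=
  ((IsObservable.contentPowerSum k).congr (by push_cast; rfl) rfl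
    rfl).tendsto_plancherelMean_abs_sub

end Asymptotics

section PlancherelMeasure

open Finset

variable {P : Measure (ℕ → ℕ → ℕ)} {μ : YoungDiagram} {s : SYT μ} {t : ℕ → ℕ → ℕ} {i : ℕ}

lemma IsInfYT.mem_of_le_card (ht : IsInfYT t) (hs : t ∈ cylEvent μ s) {c : ℕ × ℕ}
    (hc : t c.1 c.2 ≤ μ.card) : c ∈ μ := by
  obtain ⟨d, hd, hd'⟩ := s.exists_entry_eq (ht.1 c.1 c.2) hc
  rwa [(ht.2.1 _ (ht.1 c.1 c.2)).unique (y₁ := c) (y₂ := d) rfl ((hs d.1 d.2 hd).trans hd')]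

lemma IsInfYT.exists_addable (ht : IsInfYT t) (hs : t ∈ cylEvent μ s) :
    ∃ i, Addable μ i ∧ t i (μ.rowLen i) = μ.card + 1 := by
  obtain ⟨⟨i, j⟩, hc, -⟩ := ht.2.1 (μ.card + 1) (Nat.le_add_left 1 _)
  dsimp only at hc
  have hmem_of_lt {c : ℕ × ℕ} (h : t c.1 c.2 < t i j) : c ∈ μ :=
    ht.mem_of_le_card hs (by omega)
  have hnot : (i, j) ∉ μ := fun h => by
    have := hs i j h
    have := s.le_card i j
    omega
  obtain rfl : j = μ.rowLen i := by
    rw [YoungDiagram.mem_iff_lt_rowLen, not_lt] at hnot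
    refine hnot.antisymm' ?_
    cases j with
    | zero => exact Nat.zero_le _
    | succ j => exact YoungDiagram.mem_iff_lt_rowLen.1 (hmem_of_lt (c := (i, j)) (ht.2.2.1 i j))
  refine ⟨i, fun k hk => ?_, hc⟩
  obtain ⟨i, rfl⟩ := Nat.exists_eq_succ_of_ne_zero (Nat.ne_zero_of_lt hk)
  exact (YoungDiagram.mem_iff_lt_rowLen.1
    (hmem_of_lt (c := (i, μ.rowLen (i + 1))) (ht.2.2.2 i _))).trans_le
      (μ.rowLen_anti k i (Nat.lt_succ_iff.1 hk))

lemma IsInfYT.entryPos_eq (ht : IsInfYT t) (c : ℕ × ℕ) : entryPos t (t c.1 c.2) = c := by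
  have hex : ∃ d : ℕ × ℕ, t d.1 d.2 = t c.1 c.2 := ⟨c, rfl⟩
  rw [entryPos, dif_pos hex]
  exact (ht.2.1 _ (ht.1 _ _)).unique hex.choose_spec rfl

lemma measurableSet_isInfYT : MeasurableSet {t | IsInfYT t} := by
  unfold IsInfYT ExistsUnique
  measurability

lemma measurableSet_cylEvent (s : SYT μ) : MeasurableSet (cylEvent μ s) := by
  unfold cylEvent
  measurability

/-- The tableau obtained from `s` by placing the next entry at the end of row `i`. -/
def SYT.extend (s : SYT μ) (h : Addable μ i) : SYT (addCell μ i) :=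
  s.insertMax (addCell_cells h) (mk_rowLen_notMem μ i)

lemma mem_cylEvent_extend (s : SYT μ) (h : Addable μ i) :
    t ∈ cylEvent (addCell μ i) (s.extend h) ↔
      t ∈ cylEvent μ s ∧ t i (μ.rowLen i) = μ.card + 1 := by
  constructor
  · refine fun ht => ⟨fun a b hab => ?_, ?_⟩
    · exact (ht a b ((mem_addCell h).2 (Or.inr hab))).trans
        (if_neg (ne_of_mem_of_not_mem hab (mk_rowLen_notMem μ i)))
    · exact (ht i _ ((mem_addCell h).2 (Or.inl rfl))).trans (if_pos rfl)
  · rintro ⟨ht, hi⟩ a b hab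
    change t a b = if (a, b) = (i, μ.rowLen i) then μ.card + 1 else s.entry a b
    split_ifs with hc
    · rw [Prod.mk.injEq] at hc
      rw [hc.1, hc.2, hi]
    · exact ht a b (((mem_addCell h).1 hab).resolve_left hc)

/-- The event that the infinite tableau extends `s` and has its next entry in row `i`. -/
def nextBoxEvent (s : SYT μ) (i : ℕ) : Set (ℕ → ℕ → ℕ) :=
  {t | IsInfYT t ∧ t ∈ cylEvent μ s ∧ t i (μ.rowLen i) = μ.card + 1}

lemma measurableSet_nextBoxEvent (s : SYT μ) (i : ℕ) : MeasurableSet (nextBoxEvent s i) :=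
  measurableSet_isInfYT.inter ((measurableSet_cylEvent s).inter
    (measurableSet_eq_fun (by fun_prop) measurable_const))

lemma pairwise_disjoint_nextBoxEvent (s : SYT μ) :
    Pairwise (Function.onFun Disjoint (nextBoxEvent s)) := fun i j hij =>
  Set.disjoint_left.2 fun _ ⟨ht, _, hi⟩ ⟨_, _, hj⟩ => hij (congrArg Prod.fst
    ((ht.2.1 (μ.card + 1) (Nat.le_add_left 1 _)).unique (y₁ := (i, μ.rowLen i))
      (y₂ := (j, μ.rowLen j)) hi hj))

namespace PlancherelLike

lemma ae_isInfYT (hP : PlancherelLike P) : ∀ᵐ t ∂P, IsInfYT t :=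
  have := hP.1
  (prob_compl_eq_zero_iff measurableSet_isInfYT).2 hP.2.1

lemma nextBoxEvent_ae_eq (hP : PlancherelLike P) (s : SYT μ) (h : Addable μ i) :
    nextBoxEvent s i =ᵐ[P] cylEvent (addCell μ i) (s.extend h) := by
  filter_upwards [hP.ae_isInfYT] with t ht
  exact propext ((and_iff_right ht).trans (mem_cylEvent_extend s h).symm)

open Classical in
lemma cylEvent_ae_eq_biUnion (hP : PlancherelLike P) (s : SYT μ) :
    cylEvent μ s =ᵐ[P] ⋃ i ∈ {i ∈ range (μ.card + 1) | Addable μ i}, nextBoxEvent s i := by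
  filter_upwards [hP.ae_isInfYT] with t ht
  refine propext ⟨fun hs => ?_, fun h => ?_⟩
  · obtain ⟨i, hi, hti⟩ := ht.exists_addable hs
    exact Set.mem_biUnion (mem_filter.2 ⟨mem_range.2 hi.lt_card_add_one, hi⟩) ⟨ht, hs, hti⟩
  · obtain ⟨i, -, -, hs, -⟩ := Set.mem_iUnion₂.1 h
    exact hs

lemma measureReal_cylEvent (hP : PlancherelLike P) (s : SYT μ) :
    P.real (cylEvent μ s) = fSYT μ / μ.card.factorial := by
  rw [measureReal_def, hP.2.2, ENNReal.toReal_ofReal (by positivity)]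

lemma measureReal_cylEvent_extend (hP : PlancherelLike P) (s : SYT μ) (h : Addable μ i) :
    P.real (cylEvent (addCell μ i) (s.extend h)) = P.real (cylEvent μ s) * transitionProb μ i := by
  rw [hP.measureReal_cylEvent, hP.measureReal_cylEvent, transitionProb, if_pos h, addCell_card h,
    Nat.factorial_succ]
  have : (fSYT μ : ℝ) ≠ 0 := mod_cast (fSYT_pos μ).ne'
  push_cast
  field_simp

open Classical in
lemma setIntegral_cylEvent (hP : PlancherelLike P) (s : SYT μ) {F : (ℕ → ℕ → ℕ) → ℝ} {v : ℕ → ℝ}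
    (hF : ∀ i (h : Addable μ i), IntegrableOn F (cylEvent (addCell μ i) (s.extend h)) P ∧
      ∫ t in cylEvent (addCell μ i) (s.extend h), F t ∂P =
        P.real (cylEvent (addCell μ i) (s.extend h)) * v i) :
    IntegrableOn F (cylEvent μ s) P ∧
      ∫ t in cylEvent μ s, F t ∂P = P.real (cylEvent μ s) * transitionMean μ v := by
  have hunion := hP.cylEvent_ae_eq_biUnion s
  have hint : ∀ i ∈ {i ∈ range (μ.card + 1) | Addable μ i}, IntegrableOn F (nextBoxEvent s i) P :=
    fun i hi =>
      have h := (mem_filter.1 hi).2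
      (hF i h).1.congr_set_ae (hP.nextBoxEvent_ae_eq s h)
  refine ⟨((integrableOn_finset_iUnion).2 hint).congr_set_ae hunion, ?_⟩
  rw [setIntegral_congr_set hunion,
    integral_biUnion_finset _ (fun i _ => measurableSet_nextBoxEvent s i)
      (fun i _ j _ hij => pairwise_disjoint_nextBoxEvent s hij) hint,
    transitionMean_apply, mul_sum, sum_filter]
  refine sum_congr rfl fun i _ => ?_
  split_ifs with h
  · rw [setIntegral_congr_set (hP.nextBoxEvent_ae_eq s h), (hF i h).2,
      hP.measureReal_cylEvent_extend, mul_assoc]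
  · rw [transitionProb, if_neg h, zero_mul, mul_zero]

lemma setIntegral_cylEvent_entryPos (hP : PlancherelLike P) (Φ : ℕ × ℕ → ℝ) (k : ℕ)
    (s : SYT μ) :
    IntegrableOn (fun t => Φ (entryPos t (μ.card + k + 1))) (cylEvent μ s) P ∧
      ∫ t in cylEvent μ s, Φ (entryPos t (μ.card + k + 1)) ∂P =
        P.real (cylEvent μ s) *
          (growthStep ^ k) (fun ν => transitionMean ν fun i => Φ (i, ν.rowLen i)) μ := by
  have := hP.1
  induction k generalizing μ with
  | zero =>
    refine hP.setIntegral_cylEvent s fun i h => ?_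
    have hconst : ∀ᵐ t ∂P.restrict (cylEvent (addCell μ i) (s.extend h)),
        Φ (i, μ.rowLen i) = Φ (entryPos t (μ.card + 0 + 1)) := by
      rw [ae_restrict_iff' (measurableSet_cylEvent _)]
      filter_upwards [hP.ae_isInfYT] with t ht hmem
      rw [add_zero, ← ((mem_cylEvent_extend s h).1 hmem).2, ht.entryPos_eq (i, μ.rowLen i)]
    refine ⟨(integrable_const _).congr hconst, ?_⟩
    rw [← integral_congr_ae hconst, setIntegral_const, smul_eq_mul]
  | succ k ih =>
    rw [pow_succ']
    refine hP.setIntegral_cylEvent s fun i h => ?_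
    have hih := ih (s.extend h)
    rwa [addCell_card h, add_right_comm μ.card 1 k, add_assoc μ.card k 1] at hih

theorem integral_entryPos (hP : PlancherelLike P) (Φ : ℕ × ℕ → ℝ) (n : ℕ) :
    ∫ t, Φ (entryPos t (n + 1)) ∂P =
      plancherelMean n fun μ => transitionMean μ fun i => Φ (i, μ.rowLen i) := by
  have := hP.1
  obtain ⟨s⟩ := (Nat.card_pos_iff.1 (fSYT_pos ⊥)).1
  have hcyl : cylEvent ⊥ s = Set.univ :=
    Set.eq_univ_of_forall fun t i j hij => absurd hij (YoungDiagram.notMem_bot _)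
  have h := (hP.setIntegral_cylEvent_entryPos Φ n s).2
  rw [hcyl, setIntegral_univ, probReal_univ, one_mul, card_bot, zero_add] at h
  exact h

end PlancherelLike

end PlancherelMeasure

section LimitShape

lemma hasDerivAt_sqrt_four_sub_sq {x : ℝ} (hx : x ∈ Set.Ioo (-2 : ℝ) 2) :
    HasDerivAt (fun x => √(4 - x ^ 2)) (-x / √(4 - x ^ 2)) x := by
  have hpos : 0 < 4 - x ^ 2 := by nlinarith [hx.1, hx.2]
  have hsq : HasDerivAt (fun x : ℝ => 4 - x ^ 2) (-(2 * x)) x := by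
    simpa using (hasDerivAt_pow 2 x).const_sub 4
  refine (hsq.sqrt hpos.ne').congr_deriv ?_
  rw [← mul_neg, mul_div_mul_left _ _ two_ne_zero]

lemma hasDerivAt_four_sub_sq_mul_sqrt {x : ℝ} (hx : x ∈ Set.Ioo (-2 : ℝ) 2) :
    HasDerivAt (fun x => (4 - x ^ 2) * √(4 - x ^ 2)) (-3 * x * √(4 - x ^ 2)) x := by
  have hpos : 0 < 4 - x ^ 2 := by nlinarith [hx.1, hx.2]
  have hsq : HasDerivAt (fun x : ℝ => 4 - x ^ 2) (-(2 * x)) x := by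
    simpa using (hasDerivAt_pow 2 x).const_sub 4
  refine (hsq.mul (hasDerivAt_sqrt_four_sub_sq hx)).congr_deriv ?_
  have := (Real.sqrt_pos.2 hpos).ne'
  field_simp
  rw [Real.sq_sqrt hpos.le]
  ring

lemma sqrt_four_sub_sq_eq (x : ℝ) : √(4 - x ^ 2) = 2 * √(1 - (x / 2) ^ 2) := by
  rw [show 4 - x ^ 2 = 2 ^ 2 * (1 - (x / 2) ^ 2) by ring, Real.sqrt_mul (by norm_num),
    Real.sqrt_sq zero_le_two]

lemma integral_sqrt_four_sub_sq : ∫ x in (-2 : ℝ)..2, √(4 - x ^ 2) = 2 * Real.pi := by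
  simp only [sqrt_four_sub_sq_eq]
  rw [intervalIntegral.integral_const_mul,
    intervalIntegral.integral_comp_div (fun x => √(1 - x ^ 2)) two_ne_zero, neg_div,
    div_self two_ne_zero, integral_sqrt_one_sub_sq, smul_eq_mul]
  ring

lemma integral_id_mul_sqrt_four_sub_sq : ∫ x in (-2 : ℝ)..2, x * √(4 - x ^ 2) = 0 := by
  have h : ∫ x in (-2 : ℝ)..2, -x * √(4 - (-x) ^ 2) = ∫ x in (-2 : ℝ)..2, x * √(4 - x ^ 2) := by
    rw [intervalIntegral.integral_comp_neg fun x => x * √(4 - x ^ 2), neg_neg]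
  simp only [neg_mul, neg_sq, intervalIntegral.integral_neg] at h
  linarith

lemma integral_pow_add_two_mul_sqrt_four_sub_sq (k : ℕ) :
    (k + 4 : ℝ) * ∫ x in (-2 : ℝ)..2, x ^ (k + 2) * √(4 - x ^ 2) =
      4 * (k + 1) * ∫ x in (-2 : ℝ)..2, x ^ k * √(4 - x ^ 2) := by
  have hderiv : ∀ x ∈ Set.Ioo (-2 : ℝ) 2,
      HasDerivAt (fun x : ℝ => x ^ (k + 1) * ((4 - x ^ 2) * √(4 - x ^ 2)))
        (4 * (k + 1) * (x ^ k * √(4 - x ^ 2)) - (k + 4) * (x ^ (k + 2) * √(4 - x ^ 2))) x := by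
    intro x hx
    refine ((hasDerivAt_pow (k + 1) x).mul (hasDerivAt_four_sub_sq_mul_sqrt hx)).congr_deriv ?_
    push_cast
    ring
  have h := intervalIntegral.integral_eq_sub_of_hasDerivAt_of_le (by norm_num) (by fun_prop)
    hderiv (Continuous.intervalIntegrable (by fun_prop) _ _)
  rw [intervalIntegral.integral_sub (Continuous.intervalIntegrable (by fun_prop) _ _)
    (Continuous.intervalIntegrable (by fun_prop) _ _), intervalIntegral.integral_const_mul,
    intervalIntegral.integral_const_mul] at h
  norm_num at h
  linarith

lemma integral_pow_mul_sqrt_four_sub_sq : ∀ k : ℕ,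
    ∫ x in (-2 : ℝ)..2, x ^ k * √(4 - x ^ 2) = 2 * Real.pi * semicircleMoment k
  | 0 => by simp only [pow_zero, one_mul, integral_sqrt_four_sub_sq, semicircleMoment_zero, mul_one]
  | 1 => by simp only [pow_one, integral_id_mul_sqrt_four_sub_sq, semicircleMoment_one, mul_zero]
  | k + 2 => by
    have h := integral_pow_add_two_mul_sqrt_four_sub_sq k
    rw [integral_pow_mul_sqrt_four_sub_sq k] at h
    refine mul_left_cancel₀ (by positivity : (k + 4 : ℝ) ≠ 0) ?_
    linear_combination h - 2 * Real.pi * semicircleMoment_recurrence k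

/-- The density of the semicircle law on `[-2, 2]`. -/
noncomputable def semicircleDensity (x : ℝ) : ℝ := √(4 - x ^ 2) / (2 * Real.pi)

lemma continuous_semicircleDensity : Continuous semicircleDensity := by
  unfold semicircleDensity
  fun_prop

lemma integral_pow_mul_semicircleDensity (k : ℕ) :
    ∫ x in (-2 : ℝ)..2, x ^ k * semicircleDensity x = semicircleMoment k := by
  unfold semicircleDensity
  simp only [← mul_div_assoc]
  rw [intervalIntegral.integral_div, integral_pow_mul_sqrt_four_sub_sq]
  field_simp

lemma Omegastar_of_mem_Icc {x : ℝ} (hx : x ∈ Set.Icc (-2 : ℝ) 2) :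
    Omegastar x = 2 / Real.pi * (x * Real.arcsin (x / 2) + √(4 - x ^ 2)) :=
  if_pos (abs_le.2 hx)

lemma Omegastar_two : Omegastar 2 = 2 := by
  rw [Omegastar_of_mem_Icc (by norm_num)]
  norm_num [Real.arcsin_one]
  field_simp

lemma Omegastar_neg_two : Omegastar (-2) = 2 := by
  rw [Omegastar_of_mem_Icc (by norm_num)]
  norm_num [Real.arcsin_neg_one]
  field_simp

lemma Omegastar_of_two_le_abs {x : ℝ} (hx : 2 ≤ |x|) : Omegastar x = |x| := by
  rcases hx.eq_or_lt with h | h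
  · rcases (abs_eq zero_le_two).1 h.symm with rfl | rfl
    · rw [Omegastar_two, abs_two]
    · rw [Omegastar_neg_two, abs_neg, abs_two]
  · exact if_neg h.not_ge

lemma continuous_Omegastar : Continuous Omegastar := by
  refine Continuous.if_le (by fun_prop) continuous_abs continuous_abs continuous_const ?_
  intro x hx
  rw [← Omegastar_of_mem_Icc (abs_le.1 hx.le), Omegastar_of_two_le_abs hx.ge]

lemma hasDerivAt_Omegastar {x : ℝ} (hx : x ∈ Set.Ioo (-2 : ℝ) 2) :
    HasDerivAt Omegastar (2 / Real.pi * Real.arcsin (x / 2)) x := by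
  have harcsin : HasDerivAt (fun x : ℝ => Real.arcsin (x / 2)) (1 / √(4 - x ^ 2)) x := by
    refine ((Real.hasDerivAt_arcsin (by linarith [hx.1]) (by linarith [hx.2])).comp x
      ((hasDerivAt_id' x).div_const 2)).congr_deriv ?_
    rw [sqrt_four_sub_sq_eq]
    field_simp
  have hformula := (((hasDerivAt_id' x).mul harcsin).add
    (hasDerivAt_sqrt_four_sub_sq hx)).const_mul (2 / Real.pi)
  refine (hformula.congr_deriv ?_).congr_of_eventuallyEq ?_
  · ring
  · filter_upwards [Ioo_mem_nhds hx.1 hx.2] with y hy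
    exact Omegastar_of_mem_Icc (Set.Ioo_subset_Icc_self hy)

/-- Half the height of the limit shape above the axes: the limit of the rescaled number of boxes
on a diagonal of a Plancherel distributed diagram. -/
noncomputable def limitDiagonalLength (x : ℝ) : ℝ := (Omegastar x - |x|) / 2

lemma continuous_limitDiagonalLength : Continuous limitDiagonalLength :=
  (continuous_Omegastar.sub continuous_abs).div_const 2

lemma limitDiagonalLength_of_two_le_abs {x : ℝ} (hx : 2 ≤ |x|) : limitDiagonalLength x = 0 := by
  rw [limitDiagonalLength, Omegastar_of_two_le_abs hx, sub_self, zero_div]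

lemma hasDerivAt_pow_mul_limitDiagonalLength (k : ℕ) {x : ℝ} (hx : x ∈ Set.Ioo (-2 : ℝ) 2)
    (hx₀ : x ≠ 0) :
    HasDerivAt (fun x => x ^ (k + 1) * limitDiagonalLength x)
      ((k + 2) * (x ^ k * limitDiagonalLength x) - 1 / Real.pi * (x ^ k * √(4 - x ^ 2))) x := by
  refine ((hasDerivAt_pow (k + 1) x).mul
    (((hasDerivAt_Omegastar hx).sub (hasDerivAt_abs hx₀)).div_const 2)).congr_deriv ?_
  have habs : x * SignType.sign x = |x| := self_mul_sign x
  rw [Pi.sub_apply, limitDiagonalLength, ← habs, Omegastar_of_mem_Icc (Set.Ioo_subset_Icc_self hx)]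
  push_cast
  ring

lemma integral_pow_mul_limitDiagonalLength (k : ℕ) :
    ∫ x in (-2 : ℝ)..2, x ^ k * limitDiagonalLength x = 2 * semicircleMoment k / (k + 2) := by
  have hcont := continuous_limitDiagonalLength
  have h := integral_eq_of_hasDerivAt_off_countable_of_le _ _ (by norm_num : (-2 : ℝ) ≤ 2)
    (Set.countable_singleton 0) (by fun_prop)
    (fun x hx => hasDerivAt_pow_mul_limitDiagonalLength k hx.1 hx.2)
    (Continuous.intervalIntegrable (by fun_prop) _ _)
  rw [intervalIntegral.integral_sub (Continuous.intervalIntegrable (by fun_prop) _ _)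
    (Continuous.intervalIntegrable (by fun_prop) _ _), intervalIntegral.integral_const_mul,
    intervalIntegral.integral_const_mul, integral_pow_mul_sqrt_four_sub_sq,
    limitDiagonalLength_of_two_le_abs (by norm_num),
    limitDiagonalLength_of_two_le_abs (by norm_num)] at h
  rw [eq_div_iff (by positivity)]
  field_simp at h
  linarith

end LimitShape

section MomentMethod

open Finset

lemma tendsto_zero_of_forall_eventually_le {u : ℕ → ℝ} (hu : ∀ n, 0 ≤ u n)
    (h : ∀ ε > 0, ∀ᶠ n in atTop, u n ≤ ε) : Tendsto u atTop (𝓝 0) :=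
  tendsto_order.2 ⟨fun _ ha => .of_forall fun n => ha.trans_le (hu n), fun ε hε =>
    (h (ε / 2) (half_pos hε)).mono fun _ hn => hn.trans_lt (half_lt_self hε)⟩

lemma exists_abs_eval_le_mul_pow (q : Polynomial ℝ) :
    ∃ D, 0 ≤ D ∧ ∀ x : ℝ, 1 ≤ |x| → |q.eval x| ≤ D * |x| ^ q.natDegree := by
  refine ⟨∑ i ∈ range (q.natDegree + 1), |q.coeff i|, sum_nonneg fun _ _ => abs_nonneg _,
    fun x hx => ?_⟩
  rw [Polynomial.eval_eq_sum_range, sum_mul]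
  refine (abs_sum_le_sum_abs _ _).trans (sum_le_sum fun i hi => ?_)
  rw [abs_mul, abs_pow]
  gcongr
  exact mem_range_succ_iff.1 hi

lemma exists_abs_sub_eval_le_add_pow {φ : ℝ → ℝ} (hφ : Continuous φ) {C : ℝ}
    (hC : ∀ x, |φ x| ≤ C) {R ε : ℝ} (hR : 1 ≤ R) (hε : 0 < ε) :
    ∃ (q : Polynomial ℝ) (E : ℝ) (d : ℕ), 0 ≤ E ∧ ∀ r, d ≤ r → ∀ x,
      |φ x - q.eval x| ≤ ε + E * (x / R) ^ (2 * r) := by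
  obtain ⟨q, hq⟩ := exists_polynomial_near_of_continuousOn (-R) R φ hφ.continuousOn ε hε
  obtain ⟨D, hD, hqD⟩ := exists_abs_eval_le_mul_pow q
  have hC₀ : 0 ≤ C := (abs_nonneg _).trans (hC 0)
  have hR₀ : 0 < R := zero_lt_one.trans_le hR
  refine ⟨q, C + D * R ^ q.natDegree, q.natDegree, by positivity, fun r hr x => ?_⟩
  rcases le_or_gt |x| R with hx | hx
  · have hnear : |φ x - q.eval x| ≤ ε := by
      rw [abs_sub_comm]
      exact (hq x (abs_le.1 hx)).le
    have : 0 ≤ (C + D * R ^ q.natDegree) * (x / R) ^ (2 * r) :=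
      mul_nonneg (by positivity) ((even_two_mul r).pow_nonneg _)
    linarith
  · have hy : 1 ≤ |x| / R := (one_le_div hR₀).2 hx.le
    have hpow : (x / R) ^ (2 * r) = (|x| / R) ^ (2 * r) := by
      rw [pow_mul, pow_mul, div_pow, div_pow |x|, sq_abs]
    calc |φ x - q.eval x| ≤ |φ x| + |q.eval x| := abs_sub _ _
      _ ≤ C + D * |x| ^ q.natDegree := add_le_add (hC x) (hqD x (hR.trans hx.le))
      _ = C * 1 + D * R ^ q.natDegree * (|x| / R) ^ q.natDegree := by
        rw [div_pow]
        field_simp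
      _ ≤ C * (|x| / R) ^ (2 * r) + D * R ^ q.natDegree * (|x| / R) ^ (2 * r) := by
        gcongr
        · exact one_le_pow₀ hy
        · omega
      _ ≤ _ := by
        rw [hpow, ← add_mul]
        linarith

theorem exists_polynomial_dominated_approx {φ : ℝ → ℝ} (hφ : Continuous φ) {C : ℝ}
    (hC : ∀ x, |φ x| ≤ C) {R ε : ℝ} (hR : 0 ≤ R) (hε : 0 < ε) :
    ∃ q b : Polynomial ℝ, (∀ x, |φ x - q.eval x| ≤ b.eval x) ∧
      ∀ x ∈ Set.Icc (-R) R, b.eval x ≤ ε := by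
  obtain ⟨q, E, d, hE, hq⟩ :=
    exists_abs_sub_eval_le_add_pow hφ hC (by linarith : 1 ≤ R + 1) (half_pos hε)
  have hlim : Tendsto (fun r => E * ((R / (R + 1)) ^ 2) ^ r) atTop (𝓝 (E * 0)) :=
    (tendsto_pow_atTop_nhds_zero_of_lt_one (by positivity) (pow_lt_one₀ (by positivity)
      ((div_lt_one (by linarith)).2 (by linarith)) two_ne_zero)).const_mul E
  rw [mul_zero] at hlim
  obtain ⟨r, hrE, hrd⟩ :=
    ((hlim.eventually_lt_const (half_pos hε)).and (eventually_ge_atTop d)).exists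
  let b : Polynomial ℝ :=
    .C (ε / 2) + .C E * (.C (R + 1)⁻¹ * .X) ^ (2 * r)
  have hb (x : ℝ) : b.eval x = ε / 2 + E * (x / (R + 1)) ^ (2 * r) := by
    simp only [b, Polynomial.eval_add, Polynomial.eval_mul, Polynomial.eval_pow, Polynomial.eval_C,
      Polynomial.eval_X, inv_mul_eq_div]
  refine ⟨q, b, fun x => (hq r hrd x).trans_eq (hb x).symm, fun x hx => ?_⟩
  have hle : (x / (R + 1)) ^ (2 * r) ≤ ((R / (R + 1)) ^ 2) ^ r := by
    rw [pow_mul]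
    refine pow_le_pow_left₀ (sq_nonneg _) ?_ r
    rw [div_pow, div_pow]
    exact div_le_div_of_nonneg_right (sq_le_sq' hx.1 hx.2) (sq_nonneg _)
  rw [hb]
  linarith [mul_le_mul_of_nonneg_left hle hE]

lemma abs_map_sub_map_le {α : Type*} {S : (α → ℝ) →ₗ[ℝ] ℝ} (hS : Monotone S) {φ ψ b : α → ℝ}
    (h : ∀ x, |φ x - ψ x| ≤ b x) : |S φ - S ψ| ≤ S b := by
  rw [← map_sub]
  refine abs_le'.2 ⟨hS fun x => (abs_le.1 (h x)).2, ?_⟩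
  rw [← map_neg]
  exact hS fun x => neg_le.1 (abs_le.1 (h x)).1

variable {S : ℕ → YoungDiagram → (ℝ → ℝ) →ₗ[ℝ] ℝ} {ρ : ℝ → ℝ} {R : ℝ}

lemma tendsto_plancherelMean_abs_sub_integral_eval (hρ : Continuous ρ)
    (hS : ∀ k : ℕ, Tendsto (fun n => plancherelMean n fun μ =>
      |S n μ (fun x => x ^ k) - ∫ x in (-R)..R, x ^ k * ρ x|) atTop (𝓝 0)) (q : Polynomial ℝ) :
    Tendsto (fun n => plancherelMean n fun μ =>
      |S n μ (fun x => q.eval x) - ∫ x in (-R)..R, q.eval x * ρ x|) atTop (𝓝 0) := by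
  induction q using Polynomial.induction_on' with
  | add p q hp hq =>
    refine squeeze_zero (fun n => plancherelMean_nonneg fun μ _ => abs_nonneg _) (fun n => ?_)
      (by simpa only [add_zero] using hp.add hq)
    rw [← map_add]
    refine plancherelMean_mono fun μ _ => ?_
    have hadd : (fun x => (p + q).eval x) = (fun x => p.eval x) + fun x => q.eval x :=
      funext fun x => Polynomial.eval_add
    have hint : ∫ x in (-R)..R, (p + q).eval x * ρ x =
        (∫ x in (-R)..R, p.eval x * ρ x) + ∫ x in (-R)..R, q.eval x * ρ x := by
      rw [← intervalIntegral.integral_add (Continuous.intervalIntegrable (by fun_prop) _ _)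
        (Continuous.intervalIntegrable (by fun_prop) _ _)]
      simp only [Polynomial.eval_add, add_mul]
    rw [hadd, hint, map_add, add_sub_add_comm]
    exact abs_add_le _ _
  | monomial k a =>
    refine Tendsto.congr (fun n => ?_) (by simpa only [mul_zero] using (hS k).const_mul |a|)
    rw [← smul_eq_mul, ← map_smul]
    refine plancherelMean_congr fun μ _ => ?_
    have hsmul : (fun x => (Polynomial.monomial k a).eval x) = a • fun x : ℝ => x ^ k :=
      funext fun x => Polynomial.eval_monomial
    have hint : ∫ x in (-R)..R, (Polynomial.monomial k a).eval x * ρ x =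
        a * ∫ x in (-R)..R, x ^ k * ρ x := by
      rw [← intervalIntegral.integral_const_mul]
      simp only [Polynomial.eval_monomial, mul_assoc]
    rw [hsmul, hint, map_smul, smul_eq_mul, ← mul_sub, abs_mul, Pi.smul_apply, smul_eq_mul]

lemma abs_intervalIntegral_mul_le {ψ : ℝ → ℝ} {M η : ℝ} (hR : 0 ≤ R)
    (hM : ∀ x ∈ Set.Icc (-R) R, |ρ x| ≤ M) (hψ : ∀ x ∈ Set.Icc (-R) R, |ψ x| ≤ η) :
    |∫ x in (-R)..R, ψ x * ρ x| ≤ 2 * R * (η * M) := by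
  have h := intervalIntegral.norm_integral_le_of_norm_le_const (a := -R) (b := R)
    (f := fun x => ψ x * ρ x) (C := η * M) fun x hx => by
      rw [Set.uIoc_of_le (by linarith)] at hx
      have hx' := Set.Ioc_subset_Icc_self hx
      rw [Real.norm_eq_abs, abs_mul]
      exact mul_le_mul (hψ x hx') (hM x hx') (abs_nonneg _) ((abs_nonneg _).trans (hψ x hx'))
  rw [Real.norm_eq_abs, abs_of_nonneg (by linarith : 0 ≤ R - -R)] at h
  linarith

lemma exists_polynomial_integral_le (hR : 0 ≤ R) (hρ : Continuous ρ) {φ : ℝ → ℝ}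
    (hφ : Continuous φ) {C : ℝ} (hC : ∀ x, |φ x| ≤ C) {ε : ℝ} (hε : 0 < ε) :
    ∃ q b : Polynomial ℝ, (∀ x, |φ x - q.eval x| ≤ b.eval x) ∧
      |∫ x in (-R)..R, b.eval x * ρ x| ≤ ε ∧
      |(∫ x in (-R)..R, φ x * ρ x) - ∫ x in (-R)..R, q.eval x * ρ x| ≤ ε := by
  obtain ⟨M, hM⟩ := isCompact_Icc.exists_bound_of_continuousOn (s := Set.Icc (-R) R) hρ.continuousOn
  have hM₀ : 0 ≤ M := (norm_nonneg _).trans (hM 0 ⟨by linarith, hR⟩)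
  obtain ⟨q, b, hqb, hb⟩ :=
    exists_polynomial_dominated_approx hφ hC hR (by positivity : 0 < ε / (2 * R * M + 1))
  have hsmall : 2 * R * (ε / (2 * R * M + 1) * M) ≤ ε := by
    rw [div_mul_eq_mul_div, mul_div_assoc', div_le_iff₀ (by positivity)]
    linarith
  refine ⟨q, b, hqb, ?_, ?_⟩
  · refine (abs_intervalIntegral_mul_le hR hM fun x hx => ?_).trans hsmall
    rw [abs_of_nonneg ((abs_nonneg _).trans (hqb x))]
    exact hb x hx
  · rw [← intervalIntegral.integral_sub (Continuous.intervalIntegrable (by fun_prop) _ _)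
      (Continuous.intervalIntegrable (by fun_prop) _ _)]
    simp only [← sub_mul]
    exact (abs_intervalIntegral_mul_le hR hM fun x hx => (hqb x).trans (hb x hx)).trans hsmall

theorem tendsto_plancherelMean_abs_sub_integral_of_moments (hSmono : ∀ n μ, Monotone (S n μ))
    (hR : 0 ≤ R) (hρ : Continuous ρ)
    (hS : ∀ k : ℕ, Tendsto (fun n => plancherelMean n fun μ =>
      |S n μ (fun x => x ^ k) - ∫ x in (-R)..R, x ^ k * ρ x|) atTop (𝓝 0))
    {φ : ℝ → ℝ} (hφ : Continuous φ) {C : ℝ} (hC : ∀ x, |φ x| ≤ C) :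
    Tendsto (fun n => plancherelMean n fun μ => |S n μ φ - ∫ x in (-R)..R, φ x * ρ x|)
      atTop (𝓝 0) := by
  refine tendsto_zero_of_forall_eventually_le
    (fun n => plancherelMean_nonneg fun μ _ => abs_nonneg _) fun ε hε => ?_
  obtain ⟨q, b, hqb, hb, hq⟩ :=
    exists_polynomial_integral_le hR hρ hφ hC (by positivity : 0 < ε / 4)
  filter_upwards [(tendsto_plancherelMean_abs_sub_integral_eval hρ hS q).eventually_lt_const
      (by positivity : 0 < ε / 4),
    (tendsto_plancherelMean_abs_sub_integral_eval hρ hS b).eventually_lt_const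
      (by positivity : 0 < ε / 4)] with n hqn hbn
  set Iq := ∫ x in (-R)..R, q.eval x * ρ x
  set Ib := ∫ x in (-R)..R, b.eval x * ρ x
  calc plancherelMean n (fun μ => |S n μ φ - ∫ x in (-R)..R, φ x * ρ x|)
      ≤ plancherelMean n ((fun μ => |S n μ (fun x => q.eval x) - Iq|) +
          ((fun μ => |S n μ (fun x => b.eval x) - Ib|) + fun _ => ε / 2)) := by
        refine plancherelMean_mono fun μ _ => ?_
        have hdom := abs_map_sub_map_le (hSmono n μ) hqb
        simp only [Pi.add_apply]
        linarith [abs_sub_le (S n μ φ) (S n μ fun x => q.eval x) (∫ x in (-R)..R, φ x * ρ x),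
          abs_sub_le (S n μ fun x => q.eval x) Iq (∫ x in (-R)..R, φ x * ρ x),
          abs_sub_comm Iq (∫ x in (-R)..R, φ x * ρ x), le_abs_self Ib,
          le_abs_self (S n μ (fun x => b.eval x) - Ib)]
    _ ≤ ε := by
        rw [map_add, map_add, plancherelMean_const]
        linarith

lemma monotone_transitionMean (μ : YoungDiagram) : Monotone (transitionMean μ) :=
  fun _ _ h => transitionMean_mono fun i _ => h i

theorem tendsto_plancherelMean_abs_transitionMean_sub_integral {φ : ℝ → ℝ} (hφ : Continuous φ)
    {C : ℝ} (hC : ∀ x, |φ x| ≤ C) :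
    Tendsto (fun n => plancherelMean n fun μ =>
      |transitionMean μ (fun i => φ (addContent μ i / scale n)) -
        ∫ x in (-2 : ℝ)..2, φ x * semicircleDensity x|) atTop (𝓝 0) := by
  refine tendsto_plancherelMean_abs_sub_integral_of_moments
    (S := fun n μ => transitionMean μ ∘ₗ LinearMap.funLeft ℝ ℝ fun i => addContent μ i / scale n)
    (fun n μ _ _ h => monotone_transitionMean μ fun i => h _) zero_le_two
    continuous_semicircleDensity (fun k => ?_) hφ hC
  refine (tendsto_plancherelMean_abs_transitionMoment_sub k).congr fun n =>
    plancherelMean_congr fun μ _ => ?_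
  rw [integral_pow_mul_semicircleDensity]
  congr 2
  have hscale : (fun i => (addContent μ i / scale n) ^ k) =
      (scale n ^ k)⁻¹ • fun i => addContent μ i ^ k := by
    ext i
    rw [Pi.smul_apply, smul_eq_mul, div_pow, div_eq_inv_mul]
  change transitionMoment k μ / scale n ^ k =
    transitionMean μ fun i => (addContent μ i / scale n) ^ k
  rw [hscale, map_smul, smul_eq_mul, div_eq_inv_mul, transitionMoment]

theorem tendsto_plancherelMean_abs_sum_cells_sub_integral {φ : ℝ → ℝ} (hφ : Continuous φ)
    {C : ℝ} (hC : ∀ x, |φ x| ≤ C) :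
    Tendsto (fun n => plancherelMean n fun μ =>
      |(∑ c ∈ μ.cells, φ (((c.2 : ℝ) - c.1) / scale n)) / scale n ^ 2 -
        ∫ x in (-2 : ℝ)..2, φ x * limitDiagonalLength x|) atTop (𝓝 0) := by
  let S (n : ℕ) (μ : YoungDiagram) : (ℝ → ℝ) →ₗ[ℝ] ℝ :=
    (scale n ^ 2)⁻¹ • ∑ c ∈ μ.cells, LinearMap.proj (((c.2 : ℝ) - c.1) / scale n)
  have hS (n : ℕ) (μ : YoungDiagram) (ψ : ℝ → ℝ) :
      S n μ ψ = (∑ c ∈ μ.cells, ψ (((c.2 : ℝ) - c.1) / scale n)) / scale n ^ 2 := by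
    simp only [S, LinearMap.smul_apply, LinearMap.sum_apply, LinearMap.proj_apply, smul_eq_mul,
      inv_mul_eq_div]
  simp only [← hS]
  refine tendsto_plancherelMean_abs_sub_integral_of_moments (fun n μ φ ψ h => ?_) zero_le_two
    continuous_limitDiagonalLength (fun k => ?_) hφ hC
  · rw [hS, hS]
    gcongr
    exact h _
  · refine (tendsto_plancherelMean_abs_contentPowerSum_sub k).congr fun n =>
      plancherelMean_congr fun μ _ => ?_
    rw [integral_pow_mul_limitDiagonalLength, hS]
    simp only [div_pow]
    rw [← sum_div, div_div, ← pow_add, contentPowerSum]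

end MomentMethod

section DiagonalLength

open Finset

variable {μ : YoungDiagram} {i : ℕ} {s : ℝ}

/-- The number of boxes of content `c`, i.e. on the diagonal `column - row = c`. -/
def diagonalLength (μ : YoungDiagram) (c : ℤ) : ℕ := #{x ∈ μ.cells | (x.2 : ℤ) - x.1 = c}

lemma diagonalLength_add_one_le (μ : YoungDiagram) (c : ℤ) :
    diagonalLength μ (c + 1) ≤ diagonalLength μ c + 1 := by
  classical
  have hsub : {x ∈ μ.cells | (x.2 : ℤ) - x.1 = c + 1} ⊆
      insert ((-(c + 1)).toNat, 0)
        (image (fun x : ℕ × ℕ => (x.1, x.2 + 1)) {x ∈ μ.cells | (x.2 : ℤ) - x.1 = c}) := by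
    rintro ⟨a, b⟩ h
    simp only [mem_filter, YoungDiagram.mem_cells, mem_insert, mem_image, Prod.mk.injEq] at h ⊢
    obtain ⟨hmem, hc⟩ := h
    rcases b with _ | b
    · left
      omega
    · refine .inr ⟨(a, b), ⟨μ.up_left_mem le_rfl b.le_succ hmem, ?_⟩, rfl, rfl⟩
      push_cast at hc ⊢
      omega
  exact (card_le_card hsub).trans
    ((card_insert_le _ _).trans (Nat.add_le_add_right card_image_le 1))

lemma diagonalLength_le_add_one (μ : YoungDiagram) (c : ℤ) :
    diagonalLength μ c ≤ diagonalLength μ (c + 1) + 1 := by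
  classical
  have hsub : {x ∈ μ.cells | (x.2 : ℤ) - x.1 = c} ⊆
      insert (0, c.toNat)
        (image (fun x : ℕ × ℕ => (x.1 + 1, x.2)) {x ∈ μ.cells | (x.2 : ℤ) - x.1 = c + 1}) := by
    rintro ⟨a, b⟩ h
    simp only [mem_filter, YoungDiagram.mem_cells, mem_insert, mem_image, Prod.mk.injEq] at h ⊢
    obtain ⟨hmem, hc⟩ := h
    rcases a with _ | a
    · left
      omega
    · refine .inr ⟨(a, b), ⟨μ.up_left_mem a.le_succ le_rfl hmem, ?_⟩, rfl, rfl⟩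
      push_cast at hc ⊢
      omega
  exact (card_le_card hsub).trans
    ((card_insert_le _ _).trans (Nat.add_le_add_right card_image_le 1))

lemma abs_sub_le_abs_sub_of_abs_add_one_sub_le {g : ℤ → ℝ} (hg : ∀ c, |g (c + 1) - g c| ≤ 1)
    (c d : ℤ) : |g c - g d| ≤ |(c : ℝ) - d| := by
  wlog hdc : d ≤ c generalizing c d
  · rw [abs_sub_comm, abs_sub_comm (c : ℝ)]
    exact this d c (le_of_not_ge hdc)
  rw [abs_of_nonneg (sub_nonneg.2 (Int.cast_le.2 hdc))]
  induction c, hdc using Int.leInduction with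
  | base => rw [sub_self, abs_zero, sub_self]
  | succ c _ ih =>
    push_cast
    linarith [abs_sub_le (g (c + 1)) (g c) (g d), hg c]

lemma abs_diagonalLength_sub_le (μ : YoungDiagram) (c d : ℤ) :
    |(diagonalLength μ c : ℝ) - diagonalLength μ d| ≤ |(c : ℝ) - d| := by
  refine abs_sub_le_abs_sub_of_abs_add_one_sub_le (g := fun c => (diagonalLength μ c : ℝ))
    (fun c => abs_sub_le_iff.2 ⟨?_, ?_⟩) c d
  · exact sub_le_iff_le_add'.2 (mod_cast diagonalLength_add_one_le μ c)
  · exact sub_le_iff_le_add'.2 (mod_cast diagonalLength_le_add_one μ c)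

lemma diagonalLength_of_addable (h : Addable μ i) :
    diagonalLength μ (μ.rowLen i - i) = min i (μ.rowLen i) := by
  classical
  have hdiag : {x ∈ μ.cells | (x.2 : ℤ) - x.1 = μ.rowLen i - i} =
      image (fun m => (i - 1 - m, μ.rowLen i - 1 - m)) (range (min i (μ.rowLen i))) := by
    ext ⟨a, b⟩
    simp only [mem_filter, YoungDiagram.mem_cells, YoungDiagram.mem_iff_lt_rowLen, mem_image,
      mem_range, Prod.mk.injEq]
    constructor
    · rintro ⟨hb, hc⟩
      have hai : a < i := by
        by_contra! hia
        have := μ.rowLen_anti i a hia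
        omega
      exact ⟨i - 1 - a, by omega⟩
    · rintro ⟨m, hm, hab⟩
      have := h a (by omega)
      omega
  rw [diagonalLength, hdiag, card_image_of_injOn, card_range]
  intro a ha b hb hab
  simp only [coe_range, Set.mem_Iio, Prod.mk.injEq] at ha hb hab
  omega

lemma add_rowLen_of_addable (h : Addable μ i) :
    (i : ℝ) + μ.rowLen i = |addContent μ i| + 2 * diagonalLength μ (μ.rowLen i - i) := by
  rw [diagonalLength_of_addable h, addContent, Nat.cast_min]
  linarith [min_add_max (i : ℝ) (μ.rowLen i), max_sub_min_eq_abs (i : ℝ) (μ.rowLen i)]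

/-- The number of boxes on a diagonal as a step function of the diagonal's position, both rescaled
by `s`. -/
noncomputable def scaledDiagonalLength (s : ℝ) (μ : YoungDiagram) (y : ℝ) : ℝ :=
  diagonalLength μ ⌊y * s⌋ / s

lemma abs_diagonalLength_div_sub_le (hs : 0 < s) (μ : YoungDiagram) (c : ℤ) (y : ℝ) :
    |diagonalLength μ c / s - scaledDiagonalLength s μ y| ≤ |c / s - y| + 1 / s := by
  have hfloor : |y * s - ⌊y * s⌋| ≤ 1 := by
    rw [abs_of_nonneg (sub_nonneg.2 (Int.floor_le _))]
    linarith [Int.lt_floor_add_one (y * s)]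
  have hscale : |c / s - y| * s = |c - y * s| := by
    nth_rw 2 [← abs_of_pos hs]
    rw [← abs_mul, sub_mul, div_mul_cancel₀ _ hs.ne']
  rw [scaledDiagonalLength, ← sub_div, abs_div, abs_of_pos hs, div_le_iff₀ hs, add_mul,
    div_mul_cancel₀ _ hs.ne', hscale]
  linarith [abs_diagonalLength_sub_le μ c ⌊y * s⌋, abs_sub_le (c : ℝ) (y * s) ⌊y * s⌋]

lemma abs_scaledDiagonalLength_sub_le (hs : 0 < s) (μ : YoungDiagram) (x y : ℝ) :
    |scaledDiagonalLength s μ x - scaledDiagonalLength s μ y| ≤ |x - y| + 2 / s := by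
  have hfloor : |⌊x * s⌋ / s - x| ≤ 1 / s := by
    have h : ⌊x * s⌋ / s - x = -(Int.fract (x * s) / s) := by
      rw [Int.fract]
      field_simp
      ring
    rw [h, abs_neg, abs_of_nonneg (div_nonneg (Int.fract_nonneg _) hs.le)]
    exact div_le_div_of_nonneg_right (Int.fract_lt_one _).le hs.le
  have h := abs_diagonalLength_div_sub_le hs μ ⌊x * s⌋ y
  have htwo : 2 / s = 1 / s + 1 / s := by ring
  rw [← scaledDiagonalLength] at h
  linarith [abs_sub_le (⌊x * s⌋ / s) x y]

lemma scaledDiagonalLength_eq_sum_indicator (hs : 0 < s) (μ : YoungDiagram) (x : ℝ) :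
    scaledDiagonalLength s μ x = (∑ c ∈ μ.cells,
      (Set.Ico (((c.2 : ℝ) - c.1) / s) (((c.2 : ℝ) - c.1 + 1) / s)).indicator 1 x) / s := by
  rw [scaledDiagonalLength, diagonalLength, card_filter, Nat.cast_sum]
  congr 1
  refine sum_congr rfl fun c _ => ?_
  have hiff : (c.2 : ℤ) - c.1 = ⌊x * s⌋ ↔
      x ∈ Set.Ico (((c.2 : ℝ) - c.1) / s) (((c.2 : ℝ) - c.1 + 1) / s) := by
    rw [eq_comm, Int.floor_eq_iff, Set.mem_Ico, div_le_iff₀ hs, lt_div_iff₀ hs]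
    push_cast
    rfl
  simp only [hiff, Set.indicator_apply, Pi.one_apply, Nat.cast_ite, Nat.cast_one, Nat.cast_zero]

variable {φ : ℝ → ℝ}

lemma mul_scaledDiagonalLength_eq_sum_indicator (hs : 0 < s) (μ : YoungDiagram) (x : ℝ) :
    φ x * scaledDiagonalLength s μ x = (∑ c ∈ μ.cells,
      (Set.Ico (((c.2 : ℝ) - c.1) / s) (((c.2 : ℝ) - c.1 + 1) / s)).indicator φ x) / s := by
  rw [scaledDiagonalLength_eq_sum_indicator hs, mul_div_assoc', mul_sum]
  simp only [← Set.indicator_mul_right, Pi.one_apply, mul_one]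

lemma integrable_mul_scaledDiagonalLength (hs : 0 < s) (hφ : Continuous φ) (μ : YoungDiagram) :
    Integrable fun x => φ x * scaledDiagonalLength s μ x := by
  simp only [mul_scaledDiagonalLength_eq_sum_indicator hs]
  exact (integrable_finsetSum _ fun c _ => (integrable_indicator_iff measurableSet_Ico).2
    (hφ.integrableOn_Icc.mono_set Set.Ico_subset_Icc_self)).div_const s

lemma integral_mul_scaledDiagonalLength (hs : 0 < s) (hφ : Continuous φ) (μ : YoungDiagram) :
    ∫ x, φ x * scaledDiagonalLength s μ x = (∑ c ∈ μ.cells,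
      ∫ x in (((c.2 : ℝ) - c.1) / s)..(((c.2 : ℝ) - c.1 + 1) / s), φ x) / s := by
  simp only [mul_scaledDiagonalLength_eq_sum_indicator hs]
  rw [integral_div, integral_finsetSum _ fun c _ => (integrable_indicator_iff measurableSet_Ico).2
    (hφ.integrableOn_Icc.mono_set Set.Ico_subset_Icc_self)]
  congr 1
  refine sum_congr rfl fun c _ => ?_
  rw [integral_indicator measurableSet_Ico, integral_Ico_eq_integral_Ioc,
    intervalIntegral.integral_of_le (by gcongr; linarith)]

lemma abs_mul_sub_intervalIntegral_le (hφ : LipschitzWith 1 φ) {a b : ℝ} (hab : a ≤ b) :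
    |φ a * (b - a) - ∫ x in a..b, φ x| ≤ (b - a) ^ 2 := by
  have hconst : φ a * (b - a) = ∫ _ in a..b, φ a := by
    rw [intervalIntegral.integral_const, smul_eq_mul, mul_comm]
  rw [hconst, ← intervalIntegral.integral_sub intervalIntegrable_const
    (hφ.continuous.intervalIntegrable _ _)]
  have h := intervalIntegral.norm_integral_le_of_norm_le_const (a := a) (b := b)
    (f := fun x => φ a - φ x) (C := b - a) fun x hx => by
      rw [Set.uIoc_of_le hab] at hx
      refine (hφ.norm_sub_le a x).trans ?_
      rw [NNReal.coe_one, one_mul, Real.norm_eq_abs, abs_sub_comm,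
        abs_of_nonneg (by linarith [hx.1])]
      linarith [hx.2]
  rwa [Real.norm_eq_abs, abs_of_nonneg (sub_nonneg.2 hab), ← sq] at h

lemma abs_sum_cells_sub_integral_le (hφ : LipschitzWith 1 φ) (hs : 0 < s)
    (hμ : (μ.card : ℝ) ≤ s ^ 2) :
    |(∑ c ∈ μ.cells, φ (((c.2 : ℝ) - c.1) / s)) / s ^ 2 - ∫ x, φ x * scaledDiagonalLength s μ x| ≤
      1 / s := by
  have hcell : ∀ c ∈ μ.cells, |φ (((c.2 : ℝ) - c.1) / s) * (1 / s) -
      ∫ x in (((c.2 : ℝ) - c.1) / s)..(((c.2 : ℝ) - c.1 + 1) / s), φ x| ≤ (1 / s) ^ 2 := by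
    intro c _
    have h := abs_mul_sub_intervalIntegral_le hφ
      (by gcongr; linarith : ((c.2 : ℝ) - c.1) / s ≤ ((c.2 : ℝ) - c.1 + 1) / s)
    rwa [← sub_div, add_sub_cancel_left] at h
  have hsum := (abs_sum_le_sum_abs _ _).trans (sum_le_card_nsmul _ _ _ hcell)
  rw [sum_sub_distrib, ← sum_mul, nsmul_eq_mul, ← YoungDiagram.card] at hsum
  rw [integral_mul_scaledDiagonalLength hs hφ.continuous, sq, ← div_div, ← sub_div, abs_div,
    abs_of_pos hs, ← mul_one_div (∑ c ∈ μ.cells, _) s]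
  refine div_le_div_of_nonneg_right (hsum.trans ?_) hs.le
  rw [div_pow, one_pow, mul_one_div, div_le_one (by positivity)]
  exact hμ

end DiagonalLength

section ShapeConvergence

lemma abs_integral_mul_sub_le {φ g : ℝ → ℝ} {a ω : ℝ} (hφ₀ : ∀ x, 0 ≤ φ x) (hφ : Integrable φ)
    (hφg : Integrable fun x => φ x * g x) (hω : ∀ x, φ x ≠ 0 → |g x - a| ≤ ω) :
    |(∫ x, φ x * g x) - (∫ x, φ x) * a| ≤ (∫ x, φ x) * ω := by
  rw [← integral_mul_const, ← integral_sub hφg (hφ.mul_const a), ← integral_mul_const,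
    ← Real.norm_eq_abs]
  refine norm_integral_le_of_norm_le (hφ.mul_const ω) (.of_forall fun x => ?_)
  rw [← mul_sub, Real.norm_eq_abs, abs_mul, abs_of_nonneg (hφ₀ x)]
  by_cases hx : φ x = 0
  · rw [hx, zero_mul, zero_mul]
  · exact mul_le_mul_of_nonneg_left (hω x hx) (hφ₀ x)

/-- The tent function of height and half-width `δ` centred at `y`, a test function localizing the
diagram near `y`. -/
def tent (y δ x : ℝ) : ℝ := max 0 (δ - |x - y|)

lemma tent_nonneg (y δ x : ℝ) : 0 ≤ tent y δ x := le_max_left _ _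

lemma abs_tent_le (y : ℝ) {δ : ℝ} (hδ : 0 ≤ δ) (x : ℝ) : |tent y δ x| ≤ δ := by
  rw [abs_of_nonneg (tent_nonneg y δ x)]
  exact max_le hδ (sub_le_self _ (abs_nonneg _))

lemma abs_sub_lt_of_tent_ne_zero {y δ x : ℝ} (h : tent y δ x ≠ 0) : |x - y| < δ := by
  contrapose! h
  exact max_eq_left (sub_nonpos.2 h)

lemma lipschitzWith_tent (y δ : ℝ) : LipschitzWith 1 (tent y δ) := by
  have habs : LipschitzWith 1 fun x : ℝ => |x - y| := .of_le_add fun a b => by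
    linarith [abs_sub_le a b y, Real.dist_eq a b]
  refine LipschitzWith.of_le_add fun a b => ?_
  have hab := habs.dist_le_mul b a
  rw [NNReal.coe_one, one_mul, dist_comm b a, Real.dist_eq] at hab
  refine max_le (add_nonneg (tent_nonneg _ _ _) dist_nonneg) ?_
  linarith [le_max_right 0 (δ - |b - y|), (abs_le.1 hab).2, tent.eq_def y δ b]

lemma continuous_tent (y δ : ℝ) : Continuous (tent y δ) := (lipschitzWith_tent y δ).continuous

lemma hasCompactSupport_tent (y δ : ℝ) : HasCompactSupport (tent y δ) :=
  .of_support_subset_isCompact (isCompact_closedBall y δ) fun _ hx =>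
    (abs_sub_lt_of_tent_ne_zero hx).le

lemma integrable_tent (y δ : ℝ) : Integrable (tent y δ) :=
  (continuous_tent y δ).integrable_of_hasCompactSupport (hasCompactSupport_tent y δ)

lemma integral_tent_pos (y : ℝ) {δ : ℝ} (hδ : 0 < δ) : 0 < ∫ x, tent y δ x := by
  refine (continuous_tent y δ).integral_pos_of_hasCompactSupport_nonneg_nonzero
    (hasCompactSupport_tent y δ) (tent_nonneg y δ) (x := y) ?_
  rw [tent, sub_self, abs_zero, sub_zero, max_eq_right hδ.le]
  exact hδ.ne'

lemma intervalIntegral_mul_limitDiagonalLength (φ : ℝ → ℝ) :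
    ∫ x in (-2 : ℝ)..2, φ x * limitDiagonalLength x = ∫ x, φ x * limitDiagonalLength x := by
  refine intervalIntegral.integral_eq_integral_of_support_subset fun x hx => ?_
  have h : |x| < 2 := by
    by_contra! h
    exact hx (mul_eq_zero_of_right _ (limitDiagonalLength_of_two_le_abs h))
  exact ⟨(abs_lt.1 h).1, (abs_lt.1 h).2.le⟩

lemma integral_tent_mul_abs_sub_le {μ : YoungDiagram} {s y δ ω : ℝ} (hs : 0 < s)
    (hμ : (μ.card : ℝ) ≤ s ^ 2)
    (hω : ∀ x, |x - y| < δ → |limitDiagonalLength x - limitDiagonalLength y| ≤ ω) :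
    (∫ x, tent y δ x) * |scaledDiagonalLength s μ y - limitDiagonalLength y| ≤
      |(∑ c ∈ μ.cells, tent y δ (((c.2 : ℝ) - c.1) / s)) / s ^ 2 -
        ∫ x in (-2 : ℝ)..2, tent y δ x * limitDiagonalLength x| + 1 / s +
      (∫ x, tent y δ x) * (δ + 2 / s + ω) := by
  have hriemann := abs_sum_cells_sub_integral_le (lipschitzWith_tent y δ) hs hμ
  have hdiag := abs_integral_mul_sub_le (tent_nonneg y δ) (integrable_tent y δ)
    (integrable_mul_scaledDiagonalLength hs (continuous_tent y δ) μ)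
    (a := scaledDiagonalLength s μ y) (ω := δ + 2 / s) fun x hx => by
      linarith [abs_scaledDiagonalLength_sub_le hs μ x y, abs_sub_lt_of_tent_ne_zero hx]
  have hlimit := abs_integral_mul_sub_le (tent_nonneg y δ) (integrable_tent y δ)
    (((continuous_tent y δ).mul continuous_limitDiagonalLength).integrable_of_hasCompactSupport
      (hasCompactSupport_tent y δ).mul_right)
    fun x hx => hω x (abs_sub_lt_of_tent_ne_zero hx)
  rw [intervalIntegral_mul_limitDiagonalLength]
  set Z := ∫ x, tent y δ x
  set X := (∑ c ∈ μ.cells, tent y δ (((c.2 : ℝ) - c.1) / s)) / s ^ 2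
  rw [abs_le] at hriemann hdiag hlimit
  have hZ : 0 ≤ Z := integral_nonneg (tent_nonneg y δ)
  rw [← abs_of_nonneg hZ, ← abs_mul, abs_of_nonneg hZ, mul_sub, mul_add]
  refine abs_le.2 ⟨?_, ?_⟩
  · linarith [neg_abs_le (X - ∫ x, tent y δ x * limitDiagonalLength x)]
  · linarith [le_abs_self (X - ∫ x, tent y δ x * limitDiagonalLength x)]

lemma integral_tent_mul_plancherelMean_le {y δ ω : ℝ}
    (hω : ∀ x, |x - y| < δ → |limitDiagonalLength x - limitDiagonalLength y| ≤ ω) (n : ℕ) :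
    (∫ x, tent y δ x) * plancherelMean n
        (fun μ => |scaledDiagonalLength (scale n) μ y - limitDiagonalLength y|) ≤
      plancherelMean n (fun μ =>
        |(∑ c ∈ μ.cells, tent y δ (((c.2 : ℝ) - c.1) / scale n)) / scale n ^ 2 -
          ∫ x in (-2 : ℝ)..2, tent y δ x * limitDiagonalLength x|) +
      (1 / scale n + (∫ x, tent y δ x) * (δ + 2 / scale n + ω)) := by
  rw [← plancherelMean_const n (1 / scale n + _), ← map_add, ← smul_eq_mul, ← map_smul]
  refine plancherelMean_mono fun μ hμ => ?_
  have hcard : (μ.card : ℝ) ≤ scale n ^ 2 := by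
    rw [scale_sq, hμ]
    exact (lt_add_one _).le
  simpa only [Pi.smul_apply, Pi.add_apply, smul_eq_mul, add_assoc] using
    integral_tent_mul_abs_sub_le (scale_pos n) hcard hω

theorem tendsto_plancherelMean_abs_scaledDiagonalLength_sub (y : ℝ) :
    Tendsto (fun n => plancherelMean n fun μ =>
      |scaledDiagonalLength (scale n) μ y - limitDiagonalLength y|) atTop (𝓝 0) := by
  refine tendsto_zero_of_forall_eventually_le
    (fun n => plancherelMean_nonneg fun μ _ => abs_nonneg _) fun ε hε => ?_
  obtain ⟨δ', hδ', hω⟩ := Metric.continuous_iff.1 continuous_limitDiagonalLength y (ε / 4)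
    (by positivity)
  set δ := min δ' (ε / 4)
  have hδ : 0 < δ := lt_min hδ' (by positivity)
  set Z := ∫ x, tent y δ x with hZ_def
  have hZ : 0 < Z := integral_tent_pos y hδ
  have hinv : Tendsto (fun n => 1 / scale n) atTop (𝓝 0) :=
    tendsto_const_nhds.div_atTop tendsto_scale
  have herr := (tendsto_plancherelMean_abs_sum_cells_sub_integral (continuous_tent y δ)
    (abs_tent_le y hδ.le)).add (hinv.const_mul (1 + 2 * Z))
  rw [mul_zero, add_zero] at herr
  filter_upwards [herr.eventually_le_const (by positivity : 0 < Z * (ε / 2))] with n hn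
  have h := integral_tent_mul_plancherelMean_le (y := y) (δ := δ)
    (fun x hx => (hω x (hx.trans_le (min_le_left _ _))).le) n
  have hδε : Z * δ ≤ Z * (ε / 4) := mul_le_mul_of_nonneg_left (min_le_right _ _) hZ.le
  rw [← hZ_def, ← mul_one_div 2 (scale n)] at h
  exact le_of_mul_le_mul_left (by linarith) hZ

end ShapeConvergence

section HeightConvergence

open Finset

variable {μ : YoungDiagram} {i : ℕ}

/-- The sum of the 1-indexed coordinates of the box addable at the end of row `i`. -/
def addHeight (μ : YoungDiagram) (i : ℕ) : ℝ := (μ.rowLen i + 1) + (i + 1)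

lemma abs_addHeight_div_sub_Omegastar_le {s y δ ω : ℝ} (hs : 0 < s) (h : Addable μ i)
    (hδ : |addContent μ i / s - y| ≤ δ)
    (hω : |limitDiagonalLength y - limitDiagonalLength (addContent μ i / s)| ≤ ω) :
    |addHeight μ i / s - Omegastar (addContent μ i / s)| ≤
      2 * |scaledDiagonalLength s μ y - limitDiagonalLength y| + (2 * δ + 2 * ω + 4 / s) := by
  have hdiag := abs_diagonalLength_div_sub_le hs μ (μ.rowLen i - i) y
  rw [Int.cast_sub, Int.cast_natCast, Int.cast_natCast, ← addContent] at hdiag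
  have hheight : addHeight μ i / s =
      |addContent μ i / s| + 2 * (diagonalLength μ (μ.rowLen i - i) / s) + 2 * (1 / s) := by
    rw [abs_div, abs_of_pos hs, addHeight]
    field_simp
    linarith [add_rowLen_of_addable h]
  have hOmega : Omegastar (addContent μ i / s) =
      |addContent μ i / s| + 2 * limitDiagonalLength (addContent μ i / s) := by
    rw [limitDiagonalLength]
    ring
  rw [hheight, hOmega, ← mul_one_div 4 s]
  rw [abs_le] at hdiag hω
  refine abs_le.2 ⟨?_, ?_⟩
  · linarith [neg_abs_le (scaledDiagonalLength s μ y - limitDiagonalLength y), one_div_pos.2 hs]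
  · linarith [le_abs_self (scaledDiagonalLength s μ y - limitDiagonalLength y)]

lemma uniformContinuous_limitDiagonalLength : UniformContinuous limitDiagonalLength :=
  HasCompactSupport.uniformContinuous_of_continuous
    (.of_support_subset_isCompact (isCompact_Icc (a := -2) (b := 2)) fun _ hx =>
      abs_le.1 (le_of_not_ge fun h => hx (limitDiagonalLength_of_two_le_abs h)))
    continuous_limitDiagonalLength

lemma exists_addHeight_error_bound (K : ℝ) {ε : ℝ} (hε : 0 < ε) :
    ∃ D : ℕ → YoungDiagram → ℝ, (∀ n μ, 0 ≤ D n μ) ∧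
      (∀ᶠ n in atTop, plancherelMean n (D n) ≤ ε) ∧
      ∀ n μ i, Addable μ i → |addContent μ i / scale n| ≤ K →
        |addHeight μ i / scale n - Omegastar (addContent μ i / scale n)| ≤ D n μ := by
  obtain ⟨δ', hδ', hω⟩ := Metric.uniformContinuous_iff.1 uniformContinuous_limitDiagonalLength
    (ε / 8) (by positivity)
  set δ := min δ' (ε / 8)
  have hδ : 0 < δ := lt_min hδ' (by positivity)
  obtain ⟨t, -, ht, hcover⟩ := (isCompact_Icc (a := -K) (b := K)).finite_cover_balls hδ
  let X (n : ℕ) (y : ℝ) : YoungDiagram → ℝ :=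
    (2 : ℝ) • fun μ => |scaledDiagonalLength (scale n) μ y - limitDiagonalLength y|
  have hX (n y μ) : 0 ≤ X n y μ := mul_nonneg zero_le_two (abs_nonneg _)
  refine ⟨fun n => ∑ y ∈ ht.toFinset, X n y +
    fun _ => 2 * δ + 2 * (ε / 8) + 4 / scale n, fun n μ => ?_, ?_, fun n μ i hi hK => ?_⟩
  · have := scale_pos n
    simp only [Pi.add_apply, Finset.sum_apply]
    exact add_nonneg (sum_nonneg fun y _ => hX n y μ) (by positivity)
  · have hsum : Tendsto (fun n => ∑ y ∈ ht.toFinset, plancherelMean n (X n y))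
        atTop (𝓝 0) := by
      rw [← sum_const_zero (s := ht.toFinset)]
      refine tendsto_finsetSum _ fun y _ => ?_
      simpa only [X, map_smul, smul_zero] using
        (tendsto_plancherelMean_abs_scaledDiagonalLength_sub y).const_smul (2 : ℝ)
    have hinv : Tendsto (fun n => 4 / scale n) atTop (𝓝 0) :=
      tendsto_const_nhds.div_atTop tendsto_scale
    filter_upwards [(hsum.add hinv).eventually_le_const (by linarith : 0 + 0 < ε / 2)] with n hn
    rw [map_add, map_sum, plancherelMean_const]
    linarith [min_le_right δ' (ε / 8)]
  · obtain ⟨y, hy, hball⟩ := Set.mem_iUnion₂.1 (hcover (abs_le.1 hK))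
    have hdist := Metric.mem_ball.1 hball
    refine (abs_addHeight_div_sub_Omegastar_le (scale_pos n) hi hdist.le
      (hω (dist_comm y _ ▸ hdist.trans_le (min_le_left _ _))).le).trans ?_
    simp only [Pi.add_apply, Finset.sum_apply]
    gcongr
    exact single_le_sum (f := fun y => X n y μ) (fun y _ => hX n y μ) (ht.mem_toFinset.2 hy)

lemma exists_abs_sub_graph_le {f : ℝ × ℝ → ℝ} {C : ℝ} (hf : Continuous f) (hC : ∀ p, |f p| ≤ C)
    {g : ℝ → ℝ} (hg : Continuous g) {ε : ℝ} (hε : 0 < ε) :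
    ∃ K M : ℝ, 0 ≤ M ∧ ∀ u v d, 0 ≤ d → (|u| ≤ K → |v - g u| ≤ d) →
      |f (u, v) - f (u, g u)| ≤ ε + ε * u ^ 2 + M * d := by
  have hC₀ : 0 ≤ C := (abs_nonneg _).trans (hC 0)
  have hbound (u v) : |f (u, v) - f (u, g u)| ≤ 2 * C := by
    linarith [abs_sub (f (u, v)) (f (u, g u)), hC (u, v), hC (u, g u)]
  set K := √(2 * C / ε)
  have hgraph : IsCompact ((fun u => (u, g u)) '' Set.Icc (-K) K) :=
    isCompact_Icc.image (by fun_prop)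
  obtain ⟨δ, hδ, hunif⟩ := Metric.mem_uniformity_dist.1
    (hgraph.uniformContinuousAt_of_continuousAt f (fun _ _ => hf.continuousAt)
      (Metric.dist_mem_uniformity hε))
  refine ⟨K, 2 * C / δ, by positivity, fun u v d hd huv => ?_⟩
  have hMd : 0 ≤ 2 * C / δ * d := by positivity
  have hεu : 0 ≤ ε * u ^ 2 := by positivity
  rcases le_or_gt |u| K with hu | hu
  · rcases lt_or_ge |v - g u| δ with hvδ | hvδ
    · have hdist : dist (u, g u) (u, v) < δ := by
        rwa [dist_prod_same_left, dist_comm, Real.dist_eq]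
      have h : dist (f (u, g u)) (f (u, v)) < ε := hunif hdist ⟨u, abs_le.1 hu, rfl⟩
      rw [dist_comm, Real.dist_eq] at h
      linarith
    · have : 2 * C ≤ 2 * C / δ * d := by
        rw [div_mul_eq_mul_div, le_div_iff₀ hδ]
        exact mul_le_mul_of_nonneg_left (hvδ.trans (huv hu)) (by positivity)
      linarith [hbound u v]
  · have : 2 * C ≤ ε * u ^ 2 := by
      rw [← div_le_iff₀' hε, ← sq_abs]
      exact (Real.sqrt_le_left (abs_nonneg u)).1 hu.le
    linarith [hbound u v]

lemma abs_transitionMean_sub_le {φ ψ b : ℕ → ℝ} (h : ∀ i, Addable μ i → |φ i - ψ i| ≤ b i) :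
    |transitionMean μ φ - transitionMean μ ψ| ≤ transitionMean μ b := by
  rw [← map_sub]
  refine abs_le'.2 ⟨transitionMean_mono fun i hi => (abs_le.1 (h i hi)).2, ?_⟩
  rw [← map_neg]
  exact transitionMean_mono fun i hi => neg_le.1 (abs_le.1 (h i hi)).1

lemma transitionMean_add_mul_sq (μ : YoungDiagram) (s a b : ℝ) :
    transitionMean μ (fun i => a + b * (addContent μ i / s) ^ 2) =
      a + b * (transitionMoment 2 μ / s ^ 2) := by
  have h : (fun i => a + b * (addContent μ i / s) ^ 2) =
      (fun _ => a) + (b / s ^ 2) • fun i => addContent μ i ^ 2 := by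
    ext i
    simp only [Pi.add_apply, Pi.smul_apply, smul_eq_mul]
    ring
  rw [h, map_add, map_smul, transitionMean_const, transitionMoment, smul_eq_mul]
  ring

theorem tendsto_plancherelMean_abs_transitionMean_sub_graph {f : ℝ × ℝ → ℝ} (hf : Continuous f)
    {C : ℝ} (hC : ∀ p, |f p| ≤ C) :
    Tendsto (fun n => plancherelMean n fun μ =>
      |transitionMean μ (fun i => f (addContent μ i / scale n, addHeight μ i / scale n)) -
        transitionMean μ (fun i =>
          f (addContent μ i / scale n, Omegastar (addContent μ i / scale n)))|) atTop (𝓝 0) := by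
  refine tendsto_zero_of_forall_eventually_le
    (fun n => plancherelMean_nonneg fun μ _ => abs_nonneg _) fun ε hε => ?_
  obtain ⟨K, M, hM, hgraph⟩ :=
    exists_abs_sub_graph_le hf hC continuous_Omegastar (by positivity : 0 < ε / 4)
  obtain ⟨D, hD₀, hD, hbound⟩ :=
    exists_addHeight_error_bound K (by positivity : 0 < ε / (4 * (M + 1)))
  have htwo : semicircleMoment 2 = 1 := by
    rw [← mul_one 2, semicircleMoment_two_mul, catalan_one, Nat.cast_one]
  have hmoment := tendsto_plancherelMean_abs_transitionMoment_sub 2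
  rw [htwo] at hmoment
  filter_upwards [hD, hmoment.eventually_le_const zero_lt_one] with n hDn hmoment_n
  have hMD : M * plancherelMean n (D n) ≤ ε / 4 := by
    refine (mul_le_mul_of_nonneg_left hDn hM).trans ?_
    rw [mul_div_assoc', div_le_div_iff₀ (by positivity) (by positivity)]
    nlinarith
  refine (plancherelMean_mono (B := (fun _ => ε / 4 + ε / 4) + ((ε / 4) • fun μ =>
    |transitionMoment 2 μ / scale n ^ 2 - 1|) + M • D n) fun μ _ => ?_).trans ?_
  · have h := abs_transitionMean_sub_le fun i hi =>
      (hgraph _ _ _ (hD₀ n μ) (hbound n μ i hi)).trans_eq (add_right_comm _ _ _)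
    rw [transitionMean_add_mul_sq] at h
    simp only [Pi.add_apply, Pi.smul_apply, smul_eq_mul]
    nlinarith [le_abs_self (transitionMoment 2 μ / scale n ^ 2 - 1)]
  · rw [map_add, map_add, map_smul, map_smul, plancherelMean_const, smul_eq_mul, smul_eq_mul]
    nlinarith

theorem tendsto_plancherelMean_transitionMean {f : ℝ × ℝ → ℝ} (hf : Continuous f) {C : ℝ}
    (hC : ∀ p, |f p| ≤ C) :
    Tendsto (fun n => plancherelMean n fun μ => transitionMean μ fun i =>
      f (addContent μ i / scale n, addHeight μ i / scale n)) atTop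
      (𝓝 (∫ x in (-2 : ℝ)..2, f (x, Omegastar x) * semicircleDensity x)) := by
  have hΩ := continuous_Omegastar
  rw [tendsto_iff_dist_tendsto_zero]
  have hlim := (tendsto_plancherelMean_abs_transitionMean_sub_graph hf hC).add
    (tendsto_plancherelMean_abs_transitionMean_sub_integral (φ := fun x => f (x, Omegastar x))
      (by fun_prop) fun x => hC _)
  rw [add_zero] at hlim
  refine squeeze_zero (fun _ => dist_nonneg) (fun n => ?_) hlim
  set I := ∫ x in (-2 : ℝ)..2, f (x, Omegastar x) * semicircleDensity x
  rw [Real.dist_eq, ← map_add]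
  nth_rw 1 [← plancherelMean_const n I]
  rw [← map_sub]
  exact (abs_plancherelMean_le n _).trans (plancherelMean_mono fun μ _ => abs_sub_le _ _ _)

end HeightConvergence

/-- In the Plancherel growth process, writing `d_n = (a_n, b_n)` for the
box added at step `n` (in 1-indexed (column, row) Cartesian coordinates), the rescaled
rotated coordinates `n^(-1/2) (a_n - b_n, a_n + b_n)` converge in distribution to
`(U, Ω_*(U))` where `U` is semicircle-distributed.  Convergence in distribution is
expressed by testing against all bounded continuous functions. -/
theorem transition_measure_semicircle (P : Measure (ℕ → ℕ → ℕ)) (hP : PlancherelLike P)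
    (f : BoundedContinuousFunction (ℝ × ℝ) ℝ) :
    Tendsto (fun n : ℕ =>
        ∫ t, f ((((entryPos t n).2 + 1 : ℝ) - ((entryPos t n).1 + 1)) / Real.sqrt n,
                (((entryPos t n).2 + 1 : ℝ) + ((entryPos t n).1 + 1)) / Real.sqrt n) ∂P)
      atTop
      (𝓝 (∫ u in Set.Icc (-2 : ℝ) 2,
            f (u, Omegastar u) * (Real.sqrt (4 - u ^ 2) / (2 * Real.pi)))) := by
  have h := tendsto_plancherelMean_transitionMean f.continuous f.norm_coe_le_norm
  rw [intervalIntegral.integral_of_le (by norm_num), ← integral_Icc_eq_integral_Ioc] at h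
  rw [← tendsto_add_atTop_iff_nat 1]
  refine h.congr fun n => ?_
  have hscale : √((n + 1 : ℕ) : ℝ) = scale n := by rw [scale, Nat.cast_succ]
  rw [hscale, hP.integral_entryPos (fun c => f (((c.2 + 1 : ℝ) - (c.1 + 1)) / scale n,
    ((c.2 + 1 : ℝ) + (c.1 + 1)) / scale n))]
  simp only [addContent, addHeight, add_sub_add_right_eq_sub]
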